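/- Let p ∈ [2, ∞) be a real number. For every n ∈ ℕ and every bilinear form T : ℝⁿ × ℝⁿ → ℝ one has (∑_{i=1}^{n} (∑_{j=1}^{n} |T(e_i,e_j)|²)^{(1/2)·(p/(p−1))})^{(p−1)/p} ≤ A_{p/(p−1)} · ‖T‖_{p,∞}, where A_r is the optimal Khintchine constant. -/

import Mathlib

open MeasureTheory Real Filter

/-- The `j`-th Rademacher function, `r_j(t) = sgn(sin(2^j π t))`. -/
noncomputable def rademacher (j : ℕ) (t : ℝ) : ℝ :=
  Real.sign (Real.sin ((2 : ℝ) ^ j * Real.pi * t))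

/-- `p₀ ∈ (1,2)` is the unique solution of `Γ((p₀+1)/2) = √π / 2`. -/
noncomputable def khintchineP0 : ℝ :=
  sInf {p : ℝ | 1 < p ∧ p < 2 ∧ Real.Gamma ((p + 1) / 2) = Real.sqrt Real.pi / 2}

/-- The optimal constant `A_r` in the Khintchine inequality. -/
noncomputable def khintchineA (r : ℝ) : ℝ :=
  if r ≤ khintchineP0 then (2 : ℝ) ^ (1 / r - 1 / 2)
  else if r < 2 then
    (1 / Real.sqrt 2) * (Real.Gamma ((r + 1) / 2) / Real.sqrt Real.pi) ^ (-(1 / r))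
  else 1

/-- The `ℓ_p` norm of a vector in `ℝⁿ` (for finite `p`). -/
noncomputable def lpNorm (p : ℝ) {n : ℕ} (x : Fin n → ℝ) : ℝ :=
  (∑ i, |x i| ^ p) ^ (1 / p)

/-- The `ℓ_∞` norm of a vector in `ℝⁿ`. -/
noncomputable def linfNorm {n : ℕ} (x : Fin n → ℝ) : ℝ :=
  ⨆ i, |x i|

/-- The norm `‖T‖_{p,∞} = sup{|T(x,y)| : ‖x‖_{ℓ_p} ≤ 1, ‖y‖_{ℓ_∞} ≤ 1}` of a bilinear form. -/
noncomputable def bilinOpNorm (p : ℝ) {N n : ℕ}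
    (T : (Fin N → ℝ) →ₗ[ℝ] (Fin n → ℝ) →ₗ[ℝ] ℝ) : ℝ :=
  sSup {c : ℝ | ∃ (x : Fin N → ℝ) (y : Fin n → ℝ),
    lpNorm p x ≤ 1 ∧ linfNorm y ≤ 1 ∧ c = |T x y|}

/-!
Let `r = p / (p - 1)`. For every sign vector `y`, the duality of `ℓ_p` and `ℓ_r` gives
`∑ i, |T (e i) y| ^ r ≤ ‖T‖ ^ r`. Averaging over `y` and applying the Khintchine inequality with the
sharp constant to each linear form `T (e i)` bounds the left-hand side from below.

For the Khintchine inequality we follow Nazarov and Podkorytov. If `0 < r < 2`, then `|x| ^ r` is a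
multiple of `∫ (1 - cos (x u)) u ^ (-r - 1) du`, so the average of `|± a₁ ± ⋯ ± aₙ| ^ r` is a
multiple of `∫ (1 - ∏ cos (aᵢ u)) u ^ (-r - 1) du`. With `∑ aᵢ ^ 2 = 1`, weighted AM-GM with the
weights `aᵢ ^ 2` reduces the claim to `∫ (1 - |cos u| ^ s) ≥ ∫ (1 - exp (-s u ^ 2 / 2))` for
`s = 1 / aᵢ ^ 2`. The distribution functions of `|cos u|` and `exp (-u ^ 2 / 2)` cross only once, so
it is enough to treat the smallest relevant `s`, namely `s = 2`, where the two integrals are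
explicit and the claim is `Γ ((r + 1) / 2) ≤ √π / 2`, that is, `p₀ ≤ r`. If some `aᵢ ^ 2` exceeds
`1 / 2`, an induction on the number of coefficients takes over. It merges two coefficients `a, b`
into `a ± b`, and closes because the power function is replaced by a larger, locally midpoint convex
one. The exponents below `p₀` follow from `p₀` by log-convexity of moments, and the exponents above
`2` from `2` by Jensen's inequality.
-/

/-! ### Comparison of `cos` with the Gaussian of the same height -/

lemma nonneg_of_hasDerivAt_nonneg {f f' : ℝ → ℝ} {a b : ℝ} (hab : a ≤ b) (ha : 0 ≤ f a)
    (hf : ∀ x ∈ Set.Icc a b, HasDerivAt f (f' x) x) (hf' : ∀ x ∈ Set.Icc a b, 0 ≤ f' x) :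
    0 ≤ f b := by
  have hmono : MonotoneOn f (Set.Icc a b) :=
    monotoneOn_of_hasDerivWithinAt_nonneg (convex_Icc a b) (HasDerivAt.continuousOn hf)
      (fun x hx => (hf x (interior_subset hx)).hasDerivWithinAt)
      fun x hx => hf' x (interior_subset hx)
  exact ha.trans (hmono (Set.left_mem_Icc.2 hab) (Set.right_mem_Icc.2 hab) hab)

lemma cos_le_taylor_four {x : ℝ} (hx : 0 ≤ x) : cos x ≤ 1 - x ^ 2 / 2 + x ^ 4 / 24 := by
  refine sub_nonneg.1 (nonneg_of_hasDerivAt_nonneg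
    (f := fun t => 1 - t ^ 2 / 2 + t ^ 4 / 24 - cos t) (f' := fun t => sin t - (t - t ^ 3 / 6))
    hx (by simp) (fun t _ => ?_) fun t ht => sub_nonneg.2 (sin_ge_sub_cube ht.1))
  refine ((((hasDerivAt_const t 1).sub ((hasDerivAt_pow 2 t).div_const 2)).add
    ((hasDerivAt_pow 4 t).div_const 24)).sub (hasDerivAt_cos t)).congr_deriv ?_
  push_cast
  ring

lemma sin_le_taylor_five {x : ℝ} (hx : 0 ≤ x) : sin x ≤ x - x ^ 3 / 6 + x ^ 5 / 120 := by
  refine sub_nonneg.1 (nonneg_of_hasDerivAt_nonneg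
    (f := fun t => t - t ^ 3 / 6 + t ^ 5 / 120 - sin t)
    (f' := fun t => 1 - t ^ 2 / 2 + t ^ 4 / 24 - cos t)
    hx (by simp) (fun t _ => ?_) fun t ht => sub_nonneg.2 (cos_le_taylor_four ht.1))
  refine ((((hasDerivAt_id t).sub ((hasDerivAt_pow 3 t).div_const 6)).add
    ((hasDerivAt_pow 5 t).div_const 120)).sub (hasDerivAt_sin t)).congr_deriv ?_
  push_cast
  ring

lemma taylor_six_le_cos {x : ℝ} (hx : 0 ≤ x) :
    1 - x ^ 2 / 2 + x ^ 4 / 24 - x ^ 6 / 720 ≤ cos x := by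
  refine sub_nonneg.1 (nonneg_of_hasDerivAt_nonneg
    (f := fun t => cos t - (1 - t ^ 2 / 2 + t ^ 4 / 24 - t ^ 6 / 720))
    (f' := fun t => t - t ^ 3 / 6 + t ^ 5 / 120 - sin t)
    hx (by simp) (fun t _ => ?_) fun t ht => sub_nonneg.2 (sin_le_taylor_five ht.1))
  refine ((hasDerivAt_cos t).sub ((((hasDerivAt_const t 1).sub
    ((hasDerivAt_pow 2 t).div_const 2)).add ((hasDerivAt_pow 4 t).div_const 24)).sub
    ((hasDerivAt_pow 6 t).div_const 720))).congr_deriv ?_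
  push_cast
  ring

/- The next three lemmas clear denominators in `tan x ≥ x`, `tan x ≥ 3x / (3 - x²)` and
`tan x ≥ x(15 - x²) / (15 - 6x²)`, the first convergents of the continued fraction of `tan`. -/
lemma mul_cos_le_sin {x : ℝ} (hx : 0 ≤ x) (hx' : x ≤ π) : x * cos x ≤ sin x := by
  refine sub_nonneg.1 (nonneg_of_hasDerivAt_nonneg (f := fun t => sin t - t * cos t)
    (f' := fun t => t * sin t) hx (by simp) (fun t _ => ?_) fun t ht =>
      mul_nonneg ht.1 (sin_nonneg_of_nonneg_of_le_pi ht.1 (ht.2.trans hx')))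
  exact ((hasDerivAt_sin t).sub ((hasDerivAt_id t).mul (hasDerivAt_cos t))).congr_deriv
    (by simp only [id]; ring)

lemma three_mul_mul_cos_le {x : ℝ} (hx : 0 ≤ x) (hx' : x ≤ π) :
    3 * x * cos x ≤ (3 - x ^ 2) * sin x := by
  refine sub_nonneg.1 (nonneg_of_hasDerivAt_nonneg
    (f := fun t => (3 - t ^ 2) * sin t - 3 * t * cos t) (f' := fun t => t * (sin t - t * cos t))
    hx (by simp) (fun t _ => ?_) fun t ht =>
      mul_nonneg ht.1 (sub_nonneg.2 (mul_cos_le_sin ht.1 (ht.2.trans hx'))))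
  refine ((((hasDerivAt_const t 3).sub (hasDerivAt_pow 2 t)).mul (hasDerivAt_sin t)).sub
    (((hasDerivAt_id t).const_mul 3).mul (hasDerivAt_cos t))).congr_deriv ?_
  push_cast
  simp only [id, Pi.sub_apply]
  ring

lemma fifteen_mul_sub_mul_cos_le {x : ℝ} (hx : 0 ≤ x) (hx' : x ≤ π) :
    (15 * x - x ^ 3) * cos x ≤ (15 - 6 * x ^ 2) * sin x := by
  refine sub_nonneg.1 (nonneg_of_hasDerivAt_nonneg
    (f := fun t => (15 - 6 * t ^ 2) * sin t - (15 * t - t ^ 3) * cos t)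
    (f' := fun t => t * ((3 - t ^ 2) * sin t - 3 * t * cos t))
    hx (by simp) (fun t _ => ?_) fun t ht =>
      mul_nonneg ht.1 (sub_nonneg.2 (three_mul_mul_cos_le ht.1 (ht.2.trans hx'))))
  refine ((((hasDerivAt_const t 15).sub ((hasDerivAt_pow 2 t).const_mul 6)).mul
    (hasDerivAt_sin t)).sub ((((hasDerivAt_id t).const_mul 15).sub
      (hasDerivAt_pow 3 t)).mul (hasDerivAt_cos t))).congr_deriv ?_
  push_cast
  simp only [id, Pi.sub_apply]
  ring

/-- The squared radius at which the Gaussian `u ↦ exp (-u ^ 2 / 2)` takes the value `cos t`, for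
`|t| < π / 2`. -/
noncomputable def radiusSq (t : ℝ) : ℝ := -2 * log (cos t)

lemma radiusSq_zero : radiusSq 0 = 0 := by simp [radiusSq]

lemma cos_pos_of_nonneg_of_lt {t : ℝ} (h0 : 0 ≤ t) (ht : t < π / 2) : 0 < cos t :=
  cos_pos_of_mem_Ioo ⟨by linarith [pi_pos], ht⟩

lemma radiusSq_pos {t : ℝ} (h0 : 0 < t) (ht : t < π / 2) : 0 < radiusSq t := by
  have hcos : cos t < 1 := by
    simpa using cos_lt_cos_of_nonneg_of_le_pi le_rfl (by linarith) h0
  have := log_neg (cos_pos_of_nonneg_of_lt h0.le ht) hcos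
  unfold radiusSq
  linarith

lemma hasDerivAt_radiusSq {t : ℝ} (ht : cos t ≠ 0) : HasDerivAt radiusSq (2 * tan t) t := by
  refine (((hasDerivAt_cos t).log ht).const_mul (-2)).congr_deriv ?_
  rw [tan_eq_sin_div_cos]
  ring

lemma sq_lt_seven_fifths {t : ℝ} (h0 : 0 ≤ t) (ht : t ≤ 3 * π / 8) : t ^ 2 < 7 / 5 := by
  have : t < 1.18 := by linarith [pi_lt_d4]
  nlinarith

lemma pade_le_tan {t : ℝ} (h0 : 0 ≤ t) (ht : t ≤ 3 * π / 8) :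
    (15 * t - t ^ 3) / (15 - 6 * t ^ 2) ≤ tan t := by
  have hcos := cos_pos_of_nonneg_of_lt h0 (by linarith [pi_pos])
  rw [tan_eq_sin_div_cos, div_le_div_iff₀ (by linarith [sq_lt_seven_fifths h0 ht]) hcos,
    mul_comm (sin t)]
  exact fifteen_mul_sub_mul_cos_le h0 (by linarith [pi_pos])

/-- The lower bound `radiusSqLower (t ^ 2)` for `radiusSq t / t ^ 2`. It has the right Taylor
coefficients up to order two, and a pole chosen so that the derivative of `x * radiusSqLower x` at
`x = t ^ 2` agrees with the Padé bound `pade_le_tan` to order three. -/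
noncomputable def radiusSqLower (x : ℝ) : ℝ := 1 + x / 6 + 4 / 9 * x ^ 2 / (10 - 3 * x)

lemma one_le_radiusSqLower {x : ℝ} (h0 : 0 ≤ x) (h1 : x < 7 / 5) : 1 ≤ radiusSqLower x := by
  have : 0 ≤ 4 / 9 * x ^ 2 / (10 - 3 * x) := div_nonneg (by positivity) (by linarith)
  unfold radiusSqLower
  linarith

lemma hasDerivAt_mul_radiusSqLower {x : ℝ} (hx : 10 - 3 * x ≠ 0) :
    HasDerivAt (fun x => x * radiusSqLower x)
      (1 + x / 3 + (40 * x ^ 2 - 8 * x ^ 3) / (3 * (10 - 3 * x) ^ 2)) x := by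
  refine ((hasDerivAt_id x).mul (((hasDerivAt_const x 1).add ((hasDerivAt_id x).div_const 6)).add
    (((hasDerivAt_pow 2 x).const_mul (4 / 9)).div ((hasDerivAt_const x 10).sub
      ((hasDerivAt_id x).const_mul 3)) hx))).congr_deriv ?_
  push_cast
  simp only [id, Pi.add_apply, Pi.sub_apply, Pi.div_apply]
  generalize hD : 10 - 3 * x = D at hx ⊢
  field_simp
  rw [← hD]
  ring

lemma deriv_mul_radiusSqLower_le {x : ℝ} (h1 : x < 7 / 5) :
    1 + x / 3 + (40 * x ^ 2 - 8 * x ^ 3) / (3 * (10 - 3 * x) ^ 2) ≤ (15 - x) / (15 - 6 * x) := by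
  have hd : 0 < 10 - 3 * x := by linarith
  have hd' : 0 < 15 - 6 * x := by linarith
  have key : (15 - x) / (15 - 6 * x) -
      (1 + x / 3 + (40 * x ^ 2 - 8 * x ^ 3) / (3 * (10 - 3 * x) ^ 2)) =
      2 * x ^ 4 / ((10 - 3 * x) ^ 2 * (15 - 6 * x)) := by
    generalize hD : 10 - 3 * x = D at hd ⊢
    generalize hE : 15 - 6 * x = E at hd' ⊢
    field_simp
    rw [← hD, ← hE]
    ring
  have : 0 ≤ 2 * x ^ 4 / ((10 - 3 * x) ^ 2 * (15 - 6 * x)) := by positivity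
  linarith

lemma sq_mul_radiusSqLower_le_radiusSq {t : ℝ} (h0 : 0 ≤ t) (ht : t ≤ 3 * π / 8) :
    t ^ 2 * radiusSqLower (t ^ 2) ≤ radiusSq t := by
  refine sub_nonneg.1 (nonneg_of_hasDerivAt_nonneg
    (f := fun s => radiusSq s - s ^ 2 * radiusSqLower (s ^ 2))
    (f' := fun s => 2 * tan s - (1 + s ^ 2 / 3 +
      (40 * (s ^ 2) ^ 2 - 8 * (s ^ 2) ^ 3) / (3 * (10 - 3 * s ^ 2) ^ 2)) * (2 * s))
    h0 (by simp [radiusSq_zero]) (fun s hs => ?_) fun s hs => ?_)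
  · have hsq := sq_lt_seven_fifths hs.1 (hs.2.trans ht)
    have hcos := cos_pos_of_nonneg_of_lt hs.1 (by linarith [hs.2, pi_pos])
    exact (hasDerivAt_radiusSq hcos.ne').sub (((hasDerivAt_mul_radiusSqLower (by linarith)).comp s
      (hasDerivAt_pow 2 s)).congr_deriv (by push_cast; ring))
  · have hpade := pade_le_tan hs.1 (hs.2.trans ht)
    have hlower := mul_le_mul_of_nonneg_left (deriv_mul_radiusSqLower_le
      (sq_lt_seven_fifths hs.1 (hs.2.trans ht))) hs.1
    rw [mul_div_assoc', show s * (15 - s ^ 2) = 15 * s - s ^ 3 by ring] at hlower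
    linarith

lemma radiusSqLower_le_div_sq {t : ℝ} (h0 : 0 < t) (ht : t ≤ 3 * π / 8) :
    radiusSqLower (t ^ 2) ≤ radiusSq t / t ^ 2 := by
  rw [le_div_iff₀' (by positivity)]
  exact sq_mul_radiusSqLower_le_radiusSq h0.le ht

lemma one_le_radiusSq_div_sq {t : ℝ} (h0 : 0 < t) (ht : t ≤ 3 * π / 8) :
    1 ≤ radiusSq t / t ^ 2 :=
  (one_le_radiusSqLower (sq_nonneg t) (sq_lt_seven_fifths h0.le ht)).trans
    (radiusSqLower_le_div_sq h0 ht)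

lemma tan_div_self_le {t : ℝ} (h0 : 0 < t) (ht : t ≤ 3 * π / 8) :
    tan t / t ≤ (1 - t ^ 2 / 6 + t ^ 4 / 120) / (1 - t ^ 2 / 2 + t ^ 4 / 24 - t ^ 6 / 720) := by
  have hsq := sq_lt_seven_fifths h0.le ht
  have hsin : sin t / t ≤ 1 - t ^ 2 / 6 + t ^ 4 / 120 := by
    rw [div_le_iff₀ h0]
    linarith [sin_le_taylor_five h0.le]
  have hden : 0 < 1 - t ^ 2 / 2 + t ^ 4 / 24 - t ^ 6 / 720 := by
    nlinarith [sq_nonneg (t ^ 2), pow_pos h0 4]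
  rw [tan_eq_sin_div_cos, div_right_comm]
  exact div_le_div₀ (by nlinarith [pow_pos h0 4]) hsin hden (taylor_six_le_cos h0.le)

lemma taylor_ratio_mul_le {x : ℝ} (h0 : 0 < x) (h1 : x < 7 / 5) :
    (1 - x / 6 + x ^ 2 / 120) / (1 - x / 2 + x ^ 2 / 24 - x ^ 3 / 720) * (7 + radiusSqLower x) ≤
      12 * radiusSqLower x ^ 2 - 4 * radiusSqLower x := by
  have hd : 0 < 10 - 3 * x := by linarith
  have hden : 0 < 720 - 360 * x + 30 * x ^ 2 - x ^ 3 := by nlinarith [sq_nonneg x]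
  have key : 12 * radiusSqLower x ^ 2 - 4 * radiusSqLower x -
      (1 - x / 6 + x ^ 2 / 120) / (1 - x / 2 + x ^ 2 / 24 - x ^ 3 / 720) *
        (7 + radiusSqLower x) =
      x * (972000 - 961200 * x + 224460 * x ^ 2 - 21024 * x ^ 3 + 669 * x ^ 4 - x ^ 6) /
        (27 * (720 - 360 * x + 30 * x ^ 2 - x ^ 3) * (10 - 3 * x) ^ 2) := by
    rw [radiusSqLower, show 1 - x / 2 + x ^ 2 / 24 - x ^ 3 / 720 =
      (720 - 360 * x + 30 * x ^ 2 - x ^ 3) / 720 by ring]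
    generalize hD : 10 - 3 * x = D at hd ⊢
    generalize hE : 720 - 360 * x + 30 * x ^ 2 - x ^ 3 = E at hden ⊢
    field_simp
    rw [← hD, ← hE]
    ring
  have hnum : 0 ≤ 972000 - 961200 * x + 224460 * x ^ 2 - 21024 * x ^ 3 + 669 * x ^ 4 - x ^ 6 := by
    have hcube : x ^ 3 ≤ 7 / 5 * x ^ 2 := by nlinarith [mul_pos h0 h0]
    have hsixth : x ^ 6 ≤ 2 * x ^ 4 := by
      have : x ^ 2 ≤ 2 := by nlinarith
      nlinarith [pow_pos h0 4]
    nlinarith [pow_pos h0 4]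
  have : 0 ≤ x * (972000 - 961200 * x + 224460 * x ^ 2 - 21024 * x ^ 3 + 669 * x ^ 4 - x ^ 6) /
      (27 * (720 - 360 * x + 30 * x ^ 2 - x ^ 3) * (10 - 3 * x) ^ 2) := by positivity
  linarith

lemma tan_div_self_bound {t : ℝ} (h0 : 0 < t) (ht : t ≤ 3 * π / 8) :
    (tan t / t - radiusSq t / t ^ 2) * (7 + radiusSq t / t ^ 2) ≤
      11 * (radiusSq t / t ^ 2) * (radiusSq t / t ^ 2 - 1) := by
  have hsq := sq_lt_seven_fifths h0.le ht
  have htan := tan_div_self_le h0 ht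
  have hratio := taylor_ratio_mul_le (x := t ^ 2) (by positivity) hsq
  rw [← pow_mul, ← pow_mul] at hratio
  norm_num only at hratio
  have hlower := radiusSqLower_le_div_sq h0 ht
  have hone := one_le_radiusSqLower (sq_nonneg t) hsq
  generalize radiusSqLower (t ^ 2) = g at *
  generalize radiusSq t / t ^ 2 = G at *
  generalize (1 - t ^ 2 / 6 + t ^ 4 / 120) / (1 - t ^ 2 / 2 + t ^ 4 / 24 - t ^ 6 / 720) = U at *
  -- `12 g² - 4 g - U (7 + g)` is increasing in `g`, so the lower bound may be replaced by `G`.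
  have hU : U ≤ 12 * g := by
    by_contra! h
    nlinarith
  have : U * (7 + G) ≤ 12 * G ^ 2 - 4 * G := by nlinarith
  nlinarith

lemma div_le_rpow_of_one_le {q G : ℝ} (hq0 : 0 ≤ q) (hq1 : q ≤ 1) (hG : 1 ≤ G) :
    G / (q + (1 - q) * G) ≤ G ^ q := by
  have hG0 : 0 < G := by linarith
  have hmean : G ^ (1 - q) ≤ q + (1 - q) * G := by
    simpa using geom_mean_le_arith_mean2_weighted hq0 (sub_nonneg.2 hq1) zero_le_one hG0.le
      (add_sub_cancel q 1)
  have hpos : 0 < G ^ (1 - q) := rpow_pos_of_pos hG0 _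
  rw [div_le_iff₀ (hpos.trans_le hmean)]
  calc G = G ^ q * G ^ (1 - q) := by rw [← rpow_add hG0, add_sub_cancel, rpow_one]
    _ ≤ G ^ q * (q + (1 - q) * G) := by gcongr

lemma two_mul_mul_div_add_one_le {q G V : ℝ} (hq : 7 / 8 ≤ q) (hq1 : q ≤ 1) (hG : 1 ≤ G)
    (h : (V - G) * (7 + G) ≤ 11 * G * (G - 1)) :
    2 * q * (V / G) + 1 ≤ (2 * q + 1) * G ^ q := by
  have hG0 : 0 < G := by linarith
  have hD : 0 < q + (1 - q) * G := by nlinarith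
  have hpoly : 2 * (V - G) * (q + (1 - q) * G) ≤ (2 * q + 1) * G * (G - 1) := by
    rcases le_total V G with hV | hV
    · nlinarith [mul_nonneg (sub_nonneg.2 hV) hD.le, mul_nonneg hG0.le (sub_nonneg.2 hG)]
    · nlinarith [mul_nonneg (sub_nonneg.2 hq) (mul_nonneg (sub_nonneg.2 hV) (sub_nonneg.2 hG)),
        mul_nonneg (sub_nonneg.2 hq) (mul_nonneg hG0.le (sub_nonneg.2 hG))]
  calc 2 * q * (V / G) + 1 ≤ (2 * q + 1) * (G / (q + (1 - q) * G)) := by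
        rw [mul_div_assoc', div_add_one hG0.ne', mul_div_assoc', div_le_div_iff₀ hG0 hD]
        nlinarith [mul_le_mul_of_nonneg_left hpoly (by linarith : 0 ≤ q)]
    _ ≤ (2 * q + 1) * G ^ q := by
        gcongr
        exact div_le_rpow_of_one_le (by linarith) hq1 hG

/-- For `t ∈ (0, π / 2)`, the difference of the `|u| ^ (-2q - 1)`-tails, up to the factor `2q`,
beyond `t` and beyond the Gaussian radius at the same height `cos t`. -/
noncomputable def tailGap (q t : ℝ) : ℝ := t ^ (-(2 * q)) - radiusSq t ^ (-q)

lemma rpow_neg_two_mul {q t : ℝ} (ht : 0 ≤ t) : t ^ (-(2 * q)) = (t ^ 2) ^ (-q) := by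
  rw [← rpow_natCast, ← rpow_mul ht]
  congr 1
  push_cast
  ring

lemma tailGap_eq_mul {q t : ℝ} (h0 : 0 < t) (ht : t < π / 2) :
    tailGap q t = radiusSq t ^ (-q) * ((radiusSq t / t ^ 2) ^ q - 1) := by
  have hr := radiusSq_pos h0 ht
  rw [tailGap, rpow_neg_two_mul h0.le, div_rpow hr.le (by positivity), rpow_neg (by positivity),
    rpow_neg hr.le]
  have := rpow_pos_of_pos hr q
  field_simp

lemma hasDerivAt_tailGap_div_self {q t : ℝ} (h0 : 0 < t) (ht : t < π / 2) :
    HasDerivAt (fun t => tailGap q t / t)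
      (radiusSq t ^ (-q) * (2 * q * (tan t / t / (radiusSq t / t ^ 2)) + 1 -
        (2 * q + 1) * (radiusSq t / t ^ 2) ^ q) / t ^ 2) t := by
  have hr := radiusSq_pos h0 ht
  have hpow : t ^ (-(2 * q)) = radiusSq t ^ (-q) * (radiusSq t / t ^ 2) ^ q := by
    have := tailGap_eq_mul (q := q) h0 ht
    rw [tailGap] at this
    linarith
  refine (((hasDerivAt_rpow_const (Or.inl h0.ne')).sub
    ((hasDerivAt_radiusSq (cos_pos_of_nonneg_of_lt h0.le ht).ne').rpow_const
      (Or.inl hr.ne'))).div (hasDerivAt_id t) h0.ne').congr_deriv ?_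
  simp only [id, Pi.sub_apply]
  rw [rpow_sub_one h0.ne', rpow_sub_one hr.ne', hpow]
  generalize (radiusSq t / t ^ 2) ^ q = Y
  generalize radiusSq t ^ (-q) = R
  field_simp
  ring

lemma antitoneOn_tailGap_div_self {q : ℝ} (hq : 7 / 8 ≤ q) (hq1 : q ≤ 1) :
    AntitoneOn (fun t => tailGap q t / t) (Set.Ioc 0 (3 * π / 8)) := by
  have hlt {t : ℝ} (ht : t ≤ 3 * π / 8) : t < π / 2 := by linarith [pi_pos]
  refine antitoneOn_of_hasDerivWithinAt_nonpos (convex_Ioc _ _)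
    (HasDerivAt.continuousOn fun t ht => hasDerivAt_tailGap_div_self ht.1 (hlt ht.2))
    (fun t ht => (hasDerivAt_tailGap_div_self (interior_subset ht).1
      (hlt (interior_subset ht).2)).hasDerivWithinAt) fun t ht => ?_
  obtain ⟨h0, ht⟩ := interior_subset ht
  refine div_nonpos_of_nonpos_of_nonneg (mul_nonpos_of_nonneg_of_nonpos
    (rpow_nonneg (radiusSq_pos h0 (hlt ht)).le _) (sub_nonpos.2 ?_)) (sq_nonneg t)
  exact two_mul_mul_div_add_one_le hq hq1 (one_le_radiusSq_div_sq h0 ht)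
    (tan_div_self_bound h0 ht)

lemma radiusSq_three_pi_div_eight_lt : radiusSq (3 * π / 8) < 1.934 := by
  have hsq : √2 ^ 2 = 2 := sq_sqrt (by norm_num)
  have hsqrt : √2 < 1.4143 := by
    rw [sqrt_lt' (by norm_num)]
    norm_num
  have hcos : cos (3 * π / 8) ^ 2 = (2 - √2) / 4 := by
    rw [cos_sq, show 2 * (3 * π / 8) = π - π / 4 by ring, cos_pi_sub, cos_pi_div_four]
    ring
  have heq : radiusSq (3 * π / 8) = log (2 ^ 3 * ((2 + √2) / 4)) := by
    rw [radiusSq, show -2 * log (cos (3 * π / 8)) = -((2 : ℕ) * log (cos (3 * π / 8))) by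
      push_cast; ring, ← log_pow, hcos, ← log_inv]
    congr 1
    have : 2 - √2 ≠ 0 := by linarith
    field_simp
    linarith
  have hlog := log_le_sub_one_of_pos (x := (2 + √2) / 4) (by positivity)
  rw [heq, log_mul (by norm_num) (by positivity), log_pow]
  push_cast
  linarith [log_two_lt_d9]

lemma nine_div_sub_le_rpow_sub_rpow {q : ℝ} (hq : 7 / 8 ≤ q) (hq1 : q ≤ 1) :
    (9 / 25 : ℝ) - 9 / 121 ≤ (9 / 25 : ℝ) ^ q - (9 / 121 : ℝ) ^ q := by
  have hsplit {a : ℝ} (ha : 0 < a) : a ^ q = a * a⁻¹ ^ (1 - q) := by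
    rw [inv_rpow ha.le, ← rpow_neg ha.le, neg_sub, rpow_sub_one ha.ne', mul_div_cancel₀ _ ha.ne']
  have hlower : 1 + (1 - q) ≤ (9 / 25 : ℝ)⁻¹ ^ (1 - q) := by
    have hlog : 1 ≤ log (9 / 25 : ℝ)⁻¹ := by
      rw [le_log_iff_exp_le (by norm_num)]
      linarith [exp_one_lt_d9]
    rw [rpow_def_of_pos (by norm_num)]
    nlinarith [add_one_le_exp (log (9 / 25 : ℝ)⁻¹ * (1 - q))]
  have hupper : (9 / 121 : ℝ)⁻¹ ^ (1 - q) ≤ 1 + 4 * (1 - q) :=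
    calc (9 / 121 : ℝ)⁻¹ ^ (1 - q) ≤ ((3 / 2 : ℝ) ^ (8 : ℝ)) ^ (1 - q) :=
          rpow_le_rpow (by norm_num) (by norm_num) (by linarith)
      _ = (1 + 1 / 2 : ℝ) ^ (8 * (1 - q)) := by
          rw [← rpow_mul (by norm_num)]
          norm_num
      _ ≤ 1 + 8 * (1 - q) * (1 / 2) :=
          rpow_one_add_le_one_add_mul_self (by norm_num) (by linarith) (by linarith)
      _ = 1 + 4 * (1 - q) := by ring
  rw [hsplit (by norm_num : (0 : ℝ) < 9 / 25), hsplit (by norm_num : (0 : ℝ) < 9 / 121)]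
  nlinarith

lemma tailGap_three_pi_div_eight_le {q : ℝ} (hq : 7 / 8 ≤ q) (hq1 : q ≤ 1) :
    tailGap q (3 * π / 8) ≤
      (π - 3 * π / 8) ^ (-(2 * q)) - (π + 3 * π / 8) ^ (-(2 * q)) := by
  have hpi := pi_gt_d4
  have hsq : 1.3877 < (3 * π / 8) ^ 2 := by nlinarith
  have hminus : π - 3 * π / 8 = 5 / 3 * (3 * π / 8) := by ring
  have hplus : π + 3 * π / 8 = 11 / 3 * (3 * π / 8) := by ring
  have ht0 : 0 < 3 * π / 8 := by positivity
  have hr : 0 < radiusSq (3 * π / 8) := radiusSq_pos ht0 (by linarith)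
  have hone := one_le_radiusSq_div_sq ht0 le_rfl
  have hlt := radiusSq_three_pi_div_eight_lt
  rw [hminus, hplus, tailGap]
  generalize 3 * π / 8 = t at *
  have hscale {a : ℝ} (ha : 0 < a) :
      (a * t) ^ (-(2 * q)) = t ^ (-(2 * q)) * (1 / a ^ 2) ^ q := by
    rw [mul_rpow ha.le ht0.le, rpow_neg_two_mul ha.le, one_div, inv_rpow (by positivity),
      rpow_neg (by positivity), mul_comm]
  have hratio : radiusSq t ^ (-q) = t ^ (-(2 * q)) * (t ^ 2 / radiusSq t) ^ q := by
    rw [div_rpow (by positivity) hr.le, rpow_neg_two_mul ht0.le, rpow_neg hr.le,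
      rpow_neg (by positivity)]
    have := rpow_pos_of_pos (pow_pos ht0 2) q
    field_simp
  have hle : t ^ 2 / radiusSq t ≤ (t ^ 2 / radiusSq t) ^ q :=
    self_le_rpow_of_le_one (by positivity)
      ((div_le_one hr).2 ((one_le_div (by positivity)).1 hone)) hq1
  have hlower : 0.7155 ≤ t ^ 2 / radiusSq t := by
    rw [le_div_iff₀ hr]
    linarith
  have hgap := nine_div_sub_le_rpow_sub_rpow hq hq1
  rw [hscale (by norm_num), hscale (by norm_num), hratio, ← mul_one_sub, ← mul_sub]
  refine mul_le_mul_of_nonneg_left ?_ (by positivity)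
  norm_num at hgap hlower ⊢
  linarith

lemma log_sin_add_mul_cos_div_sin_nonpos {x : ℝ} (h0 : 0 < x) (hx : x ≤ π / 8) :
    log (sin x) + x * (cos x / sin x) ≤ 0 := by
  have hx' : x < 0.3928 := by linarith [pi_lt_d4]
  have hsin : 0 < sin x := sin_pos_of_pos_of_lt_pi h0 (by linarith [pi_pos])
  have hlog : log (sin x) ≤ exp 1 * x - 2 + (sin x / x - 1) := by
    have hlog_x := log_le_sub_one_of_pos (x := x * exp 1) (by positivity)
    have hlog_div := log_le_sub_one_of_pos (x := sin x / x) (by positivity)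
    rw [log_mul h0.ne' (exp_pos 1).ne', log_exp] at hlog_x
    rw [log_div hsin.ne' h0.ne'] at hlog_div
    linarith
  have hdiv : sin x / x ≤ 1 - x ^ 2 / 6 + x ^ 4 / 120 := by
    rw [div_le_iff₀ h0]
    linarith [sin_le_taylor_five h0.le]
  have hcot : x * (cos x / sin x) ≤ 1 - x ^ 2 / 3 := by
    rw [mul_div_assoc', div_le_iff₀ hsin]
    linarith [three_mul_mul_cos_le h0.le (by linarith [pi_pos])]
  have hsq : x ^ 2 ≤ 0.16 := by nlinarith
  have hfourth : x ^ 4 ≤ 0.16 * x ^ 2 := by nlinarith [sq_nonneg x]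
  nlinarith [exp_one_lt_d9]

lemma monotoneOn_mul_radiusSq_pi_div_two_sub :
    MonotoneOn (fun t => t * radiusSq (π / 2 - t)) (Set.Ioc 0 (π / 8)) := by
  have hderiv : ∀ t ∈ Set.Ioc 0 (π / 8), HasDerivAt (fun t => -2 * (t * log (sin t)))
      (-2 * (log (sin t) + t * (cos t / sin t))) t := fun t ht =>
    (((hasDerivAt_id t).mul ((hasDerivAt_sin t).log (sin_pos_of_pos_of_lt_pi ht.1
      (by linarith [ht.2, pi_pos])).ne')).const_mul (-2)).congr_deriv (by simp only [id, one_mul])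
  have heq : (fun t => t * radiusSq (π / 2 - t)) = fun t => -2 * (t * log (sin t)) := by
    funext t
    rw [radiusSq, cos_pi_div_two_sub]
    ring
  rw [heq]
  refine monotoneOn_of_hasDerivWithinAt_nonneg (convex_Ioc _ _) (HasDerivAt.continuousOn hderiv)
    (fun t ht => (hderiv t (interior_subset ht)).hasDerivWithinAt) fun t ht => ?_
  obtain ⟨h0, ht⟩ := interior_subset ht
  linarith [log_sin_add_mul_cos_div_sin_nonpos h0 ht]

/-! ### The measures `u ^ (-p - 1) du` and the distribution of `|cos|` -/

/-- The measure `u ^ (-p - 1) du` on the positive half-line, which represents powers: for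
`0 < p < 2`, `|x| ^ p` is a multiple of `∫ (1 - cos (x u)) dμ(u)`. -/
noncomputable def powerMeasure (p : ℝ) : Measure ℝ :=
  (volume.restrict (Set.Ioi 0)).withDensity fun u => ENNReal.ofReal (u ^ (-p - 1))

section PowerMeasure

variable {p : ℝ}

lemma lintegral_powerMeasure {f : ℝ → ENNReal} (hf : Measurable f) :
    ∫⁻ u, f u ∂powerMeasure p = ∫⁻ u in Set.Ioi 0, ENNReal.ofReal (u ^ (-p - 1)) * f u := by
  rw [powerMeasure, lintegral_withDensity_eq_lintegral_mul _ (by fun_prop) hf]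
  rfl

instance : NullSingletonClass (powerMeasure p) :=
  ⟨fun x => (withDensity_absolutelyContinuous _ _).trans
    (Measure.absolutelyContinuous_of_le Measure.restrict_le_self) (measure_singleton x)⟩

instance : SFinite (powerMeasure p) := by
  unfold powerMeasure
  infer_instance

lemma powerMeasure_Iic_zero : powerMeasure p (Set.Iic 0) = 0 := by
  refine withDensity_absolutelyContinuous _ _ ?_
  rw [Measure.restrict_apply measurableSet_Iic, Set.Iic_inter_Ioi, Set.Ioc_self, measure_empty]

lemma ae_powerMeasure_pos : ∀ᵐ u ∂powerMeasure p, 0 < u := by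
  simp only [ae_iff, not_lt]
  exact powerMeasure_Iic_zero

lemma powerMeasure_Ioi {a : ℝ} (hp : 0 < p) (ha : 0 < a) :
    powerMeasure p (Set.Ioi a) = ENNReal.ofReal (a ^ (-p) / p) := by
  have hnonneg : 0 ≤ᵐ[volume.restrict (Set.Ioi a)] fun u => u ^ (-p - 1) := by
    filter_upwards [self_mem_ae_restrict measurableSet_Ioi] with u hu
    exact rpow_nonneg (ha.trans hu).le _
  rw [powerMeasure, withDensity_apply _ measurableSet_Ioi,
    Measure.restrict_restrict measurableSet_Ioi,
    Set.inter_eq_left.2 (Set.Ioi_subset_Ioi ha.le), ← ofReal_integral_eq_lintegral_ofReal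
      (integrableOn_Ioi_rpow_of_lt (by linarith) ha) hnonneg,
    integral_Ioi_rpow_of_lt (by linarith) ha, sub_add_cancel, neg_div_neg_eq]

lemma powerMeasure_Ioc {a b : ℝ} (hp : 0 < p) (ha : 0 < a) (hab : a ≤ b) :
    powerMeasure p (Set.Ioc a b) = ENNReal.ofReal ((a ^ (-p) - b ^ (-p)) / p) := by
  have hb : 0 < b := ha.trans_le hab
  rw [← Set.Ioi_sdiff_Ioi, measure_sdiff (Set.Ioi_subset_Ioi hab)
    measurableSet_Ioi.nullMeasurableSet (by rw [powerMeasure_Ioi hp hb]; finiteness),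
    powerMeasure_Ioi hp ha, powerMeasure_Ioi hp hb, ← ENNReal.ofReal_sub _ (by positivity), sub_div]

lemma powerMeasure_closedBall {c r : ℝ} (hp : 0 < p) (hr : 0 ≤ r) (hrc : r < c) :
    powerMeasure p (Metric.closedBall c r) =
      ENNReal.ofReal (((c - r) ^ (-p) - (c + r) ^ (-p)) / p) := by
  rw [closedBall_eq_Icc, ← measure_congr Ioc_ae_eq_Icc,
    powerMeasure_Ioc hp (by linarith) (by linarith)]

lemma powerMeasure_ball (c r : ℝ) :
    powerMeasure p (Metric.ball c r) = powerMeasure p (Metric.closedBall c r) := by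
  rw [ball_eq_Ioo, closedBall_eq_Icc, measure_congr Ioo_ae_eq_Icc]

lemma hasDerivAt_const_add_rpow {c x : ℝ} (r : ℝ) (hx : 0 < c + x) :
    HasDerivAt (fun x => (c + x) ^ r) (r * (c + x) ^ (r - 1)) x :=
  (((hasDerivAt_id x).const_add c).rpow_const (Or.inl hx.ne')).congr_deriv
    (by simp only [id]; ring)

lemma hasDerivAt_const_sub_rpow {c x : ℝ} (r : ℝ) (hx : x < c) :
    HasDerivAt (fun x => (c - x) ^ r) (-r * (c - x) ^ (r - 1)) x :=
  (((hasDerivAt_id x).const_sub c).rpow_const (Or.inl (sub_pos.2 hx).ne')).congr_deriv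
    (by simp only [id]; ring)

lemma convexOn_rpow_neg_sub_rpow_neg {c : ℝ} (hp : 0 ≤ p) :
    ConvexOn ℝ (Set.Ico 0 c) fun x => (c - x) ^ (-p) - (c + x) ^ (-p) := by
  have hsub (r x : ℝ) (hx : x ∈ Set.Ico 0 c) := hasDerivAt_const_sub_rpow r hx.2
  have hadd (r x : ℝ) (hx : x ∈ Set.Ico 0 c) :=
    hasDerivAt_const_add_rpow r (show 0 < c + x by linarith [hx.1, hx.2])
  refine convexOn_of_hasDerivWithinAt2_nonneg (convex_Ico 0 c)
    (HasDerivAt.continuousOn fun x hx => (hsub _ x hx).sub (hadd _ x hx))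
    (fun x hx => ((hsub _ x (interior_subset hx)).sub
      (hadd _ x (interior_subset hx))).hasDerivWithinAt)
    (fun x hx => (((hsub _ x (interior_subset hx)).const_mul _).sub
      ((hadd _ x (interior_subset hx)).const_mul _)).hasDerivWithinAt) fun x hx => ?_
  obtain ⟨h0, hx⟩ := interior_subset hx
  have hle : (c + x) ^ (-p - 1 - 1) ≤ (c - x) ^ (-p - 1 - 1) :=
    rpow_le_rpow_of_nonpos (by linarith) (by linarith) (by linarith)
  have hcoef : 0 ≤ p * (p + 1) := by positivity
  linarith [mul_le_mul_of_nonneg_left hle hcoef]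

lemma powerMeasure_closedBall_ratio {c s t : ℝ} (hp : 0 < p) (hs : 0 < s) (hst : s ≤ t)
    (htc : t < c) :
    ENNReal.ofReal (t / s) * powerMeasure p (Metric.closedBall c s) ≤
      powerMeasure p (Metric.closedBall c t) := by
  have ht : 0 < t := hs.trans_le hst
  have hconv := (convexOn_rpow_neg_sub_rpow_neg hp.le).2
    (show (0 : ℝ) ∈ Set.Ico 0 c from ⟨le_rfl, ht.trans htc⟩)
    (show t ∈ Set.Ico 0 c from ⟨ht.le, htc⟩)
    (show 0 ≤ 1 - s / t from sub_nonneg.2 ((div_le_one ht).2 hst))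
    (show 0 ≤ s / t by positivity) (by ring)
  simp only [smul_eq_mul, mul_zero, zero_add, sub_zero, add_zero, sub_self] at hconv
  rw [div_mul_cancel₀ _ ht.ne', div_mul_eq_mul_div, le_div_iff₀ ht] at hconv
  rw [powerMeasure_closedBall hp hs.le (hst.trans_lt htc), powerMeasure_closedBall hp ht.le htc,
    ← ENNReal.ofReal_mul (by positivity), mul_div_assoc']
  gcongr
  rw [div_mul_eq_mul_div, div_le_iff₀ hs]
  linarith

lemma lintegral_powerMeasure_comp_mul {a : ℝ} (ha : 0 < a) {f : ℝ → ENNReal} (hf : Measurable f) :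
    ∫⁻ u, f (a * u) ∂powerMeasure p = ENNReal.ofReal (a ^ p) * ∫⁻ u, f u ∂powerMeasure p := by
  rw [lintegral_powerMeasure hf, lintegral_powerMeasure (f := fun u => f (a * u)) (by fun_prop),
    ← lintegral_indicator measurableSet_Ioi, ← lintegral_indicator measurableSet_Ioi]
  conv_rhs => rw [← smul_map_volume_mul_left ha.ne']
  rw [lintegral_smul_measure, lintegral_map (by measurability) (by fun_prop), smul_eq_mul,
    ← mul_assoc, ← lintegral_const_mul' _ _ (by finiteness)]
  congr with u
  by_cases hu : 0 < u
  · rw [Set.indicator_of_mem (Set.mem_Ioi.2 hu),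
      Set.indicator_of_mem (Set.mem_Ioi.2 (by positivity)), ← mul_assoc, abs_of_pos ha,
      ← ENNReal.ofReal_mul (by positivity),
      ← ENNReal.ofReal_mul (by positivity), mul_rpow ha.le hu.le, rpow_sub_one ha.ne',
      rpow_neg ha.le]
    congr 2
    have := rpow_pos_of_pos ha p
    field_simp
  · rw [Set.indicator_of_notMem (by exact hu), Set.indicator_of_notMem, mul_zero]
    simpa only [Set.mem_Ioi, mul_pos_iff_of_pos_left ha] using hu

end PowerMeasure

lemma setOf_cos_le_abs_cos {τ : ℝ} (h0 : 0 ≤ τ) (h1 : τ ≤ π / 2) :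
    {u | cos τ ≤ |cos u|} = ⋃ k : ℤ, Metric.closedBall (k * π) τ := by
  have habs (k : ℤ) (u : ℝ) : |cos u| = |cos (|u - k * π|)| := by
    rw [cos_abs, cos_sub_int_mul_pi, abs_mul, abs_neg_one_zpow, one_mul]
  have hpi := pi_pos
  ext u
  simp only [Set.mem_ofPred_eq, Set.mem_iUnion, Metric.mem_closedBall, dist_eq]
  constructor
  · intro h
    have hround : |u - round (u / π) * π| ≤ π / 2 :=
      calc |u - round (u / π) * π| = |u / π - round (u / π)| * π := by
            rw [← abs_of_pos hpi, ← abs_mul, abs_of_pos hpi, sub_mul, div_mul_cancel₀ _ hpi.ne']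
        _ ≤ 1 / 2 * π := by
            gcongr
            exact abs_sub_round _
        _ = π / 2 := by ring
    refine ⟨round (u / π), ?_⟩
    rw [habs (round (u / π)), abs_of_nonneg (cos_nonneg_of_mem_Icc
      ⟨by linarith [abs_nonneg (u - round (u / π) * π)], hround⟩)] at h
    exact (strictAntiOn_cos.le_iff_ge ⟨h0, by linarith⟩ ⟨abs_nonneg _, by linarith⟩).1 h
  · rintro ⟨k, hk⟩
    rw [habs k]
    exact (cos_le_cos_of_nonneg_of_le_pi (abs_nonneg _) (by linarith) hk).trans (le_abs_self _)

lemma setOf_abs_cos_lt_cos {τ : ℝ} (h0 : 0 ≤ τ) (h1 : τ ≤ π / 2) :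
    {u | |cos u| < cos τ} = ⋃ k : ℤ, Metric.ball ((k + 1 / 2) * π) (π / 2 - τ) := by
  have hcompl : {u | |cos u| < cos τ} = {u | cos τ ≤ |cos u|}ᶜ := by
    ext u
    simp
  have hpi := pi_pos
  ext u
  simp only [hcompl, setOf_cos_le_abs_cos h0 h1, Set.mem_compl_iff, Set.mem_iUnion, not_exists,
    Metric.mem_closedBall, Metric.mem_ball, dist_eq, not_le]
  constructor
  · intro h
    have hleft := h ⌊u / π⌋
    have hright := h (⌊u / π⌋ + 1)
    have hfloor : ⌊u / π⌋ * π ≤ u := (le_div_iff₀ hpi).1 (Int.floor_le _)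
    have hceil : u < (⌊u / π⌋ + 1) * π := (div_lt_iff₀ hpi).1 (Int.lt_floor_add_one _)
    push_cast at hright
    rw [abs_of_nonneg (by linarith)] at hleft
    rw [abs_of_nonpos (by linarith)] at hright
    exact ⟨⌊u / π⌋, abs_lt.2 ⟨by linarith, by linarith⟩⟩
  · rintro ⟨k, hk⟩ m
    rw [abs_lt] at hk
    rw [lt_abs]
    rcases le_or_gt m k with h | h
    · have : (m : ℝ) ≤ k := by exact_mod_cast h
      exact Or.inl (by nlinarith)
    · have : (k : ℝ) + 1 ≤ m := by exact_mod_cast h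
      exact Or.inr (by nlinarith)

lemma measurableSet_abs_cos_lt (y : ℝ) : MeasurableSet {u | |cos u| < y} :=
  measurableSet_lt (by fun_prop) measurable_const

lemma pi_le_dist_add_mul_pi {i j : ℤ} (hij : i ≠ j) (a : ℝ) :
    π ≤ dist ((i + a) * π) ((j + a) * π) := by
  rw [dist_eq, ← sub_mul, add_sub_add_right_eq_sub, abs_mul, abs_of_pos pi_pos]
  have : (1 : ℝ) ≤ |(i : ℝ) - j| := by
    exact_mod_cast Int.one_le_abs (sub_ne_zero.2 hij)
  nlinarith [pi_pos]

lemma powerMeasure_abs_cos_lt {p τ : ℝ} (h0 : 0 ≤ τ) (h1 : τ ≤ π / 2) :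
    powerMeasure p {u | |cos u| < cos τ} =
      ∑' k : ℤ, powerMeasure p (Metric.ball ((k + 1 / 2) * π) (π / 2 - τ)) := by
  rw [setOf_abs_cos_lt_cos h0 h1, measure_iUnion _ fun _ => measurableSet_ball]
  exact fun i j hij => Metric.ball_disjoint_ball
    (by linarith [pi_le_dist_add_mul_pi hij (1 / 2)])

lemma Ioi_sdiff_setOf_abs_cos_lt_cos {τ : ℝ} (h0 : 0 < τ) (h1 : τ < π / 2) :
    Set.Ioi τ \ {u | |cos u| < cos τ} = ⋃ k : ℕ, Metric.closedBall ((k + 1) * π) τ := by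
  have hcompl : Set.Ioi τ \ {u | |cos u| < cos τ} = Set.Ioi τ ∩ {u | cos τ ≤ |cos u|} := by
    ext u
    simp
  ext u
  simp only [hcompl, setOf_cos_le_abs_cos h0.le h1.le, Set.mem_inter_iff, Set.mem_Ioi,
    Set.mem_iUnion, Metric.mem_closedBall, dist_eq]
  constructor
  · rintro ⟨hu, k, hk⟩
    have hk0 : 0 < k := by
      by_contra! hneg
      have : (k : ℝ) ≤ 0 := by exact_mod_cast hneg
      nlinarith [(abs_le.1 hk).2, pi_pos]
    lift k to ℕ using hk0.le
    obtain ⟨m, rfl⟩ := Nat.exists_eq_add_one_of_ne_zero (by exact_mod_cast hk0.ne')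
    exact ⟨m, by simpa using hk⟩
  · rintro ⟨k, hk⟩
    refine ⟨?_, k + 1, by simpa using hk⟩
    have : (0 : ℝ) ≤ k * π := by positivity
    linarith [(abs_le.1 hk).1, pi_pos]

lemma powerMeasure_abs_cos_lt_add {p τ : ℝ} (h0 : 0 < τ) (h1 : τ < π / 2) :
    powerMeasure p {u | |cos u| < cos τ} +
      ∑' k : ℕ, powerMeasure p (Metric.closedBall ((k + 1) * π) τ) =
      powerMeasure p (Set.Ioi τ) := by
  rw [← measure_inter_add_sdiff (Set.Ioi τ) (measurableSet_abs_cos_lt (cos τ)),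
    Ioi_sdiff_setOf_abs_cos_lt_cos h0 h1, measure_iUnion _ fun _ => measurableSet_closedBall]
  · congr 1
    refine measure_congr ?_
    filter_upwards [ae_powerMeasure_pos] with u hu
    refine propext ⟨fun h => ⟨?_, h⟩, fun h => h.2⟩
    by_contra! hle
    exact (h.trans_le ((cos_le_cos_of_nonneg_of_le_pi hu.le (by linarith) (not_lt.1 hle)).trans
      (le_abs_self _))).false
  · intro i j hij
    have hdist := pi_le_dist_add_mul_pi (Nat.cast_injective (R := ℤ).ne hij) 1
    simp only [Int.cast_natCast] at hdist
    exact Metric.closedBall_disjoint_closedBall (by linarith)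

lemma powerMeasure_exp_lt {q τ : ℝ} (hq : 0 < q) (h0 : 0 < τ) (h1 : τ < π / 2) :
    powerMeasure (2 * q) {u | exp (-u ^ 2 / 2) < cos τ} =
      ENNReal.ofReal (radiusSq τ ^ (-q) / (2 * q)) := by
  have hr := radiusSq_pos h0 h1
  have hpow : radiusSq τ ^ (-q) = √(radiusSq τ) ^ (-(2 * q)) := by
    rw [rpow_neg_two_mul (sqrt_nonneg _), sq_sqrt hr.le]
  rw [hpow, ← powerMeasure_Ioi (by positivity) (sqrt_pos.2 hr)]
  refine measure_congr ?_
  filter_upwards [ae_powerMeasure_pos] with u hu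
  refine propext ?_
  change exp (-u ^ 2 / 2) < cos τ ↔ √(radiusSq τ) < u
  rw [sqrt_lt hr.le hu.le, ← lt_log_iff_exp_lt (cos_pos_of_nonneg_of_lt h0.le h1), radiusSq]
  constructor <;> intro h <;> linarith

lemma powerMeasure_abs_cos_lt_le_iff {q τ : ℝ} (hq : 0 < q) (h0 : 0 < τ) (h1 : τ < π / 2) :
    powerMeasure (2 * q) {u | |cos u| < cos τ} ≤
        powerMeasure (2 * q) {u | exp (-u ^ 2 / 2) < cos τ} ↔
      ENNReal.ofReal (tailGap q τ / (2 * q)) ≤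
        ∑' k : ℕ, powerMeasure (2 * q) (Metric.closedBall ((k + 1) * π) τ) := by
  have hadd := powerMeasure_abs_cos_lt_add (p := 2 * q) h0 h1
  have htail := powerMeasure_Ioi (p := 2 * q) (by positivity) h0
  have hfin : ∑' k : ℕ, powerMeasure (2 * q) (Metric.closedBall ((k + 1) * π) τ) ≠ ⊤ :=
    ne_top_of_le_ne_top (htail ▸ ENNReal.ofReal_ne_top) (hadd ▸ le_add_self)
  have hr := radiusSq_pos h0 h1
  rw [powerMeasure_exp_lt hq h0 h1, tailGap, sub_div, ENNReal.ofReal_sub _ (by positivity), ← htail,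
    tsub_le_iff_left, ← hadd, ENNReal.add_le_add_iff_right hfin]

lemma powerMeasure_abs_cos_lt_cos_three_pi_div_eight_le {q : ℝ} (hq : 7 / 8 ≤ q) (hq1 : q ≤ 1) :
    powerMeasure (2 * q) {u | |cos u| < cos (3 * π / 8)} ≤
      powerMeasure (2 * q) {u | exp (-u ^ 2 / 2) < cos (3 * π / 8)} := by
  have hpi := pi_pos
  rw [powerMeasure_abs_cos_lt_le_iff (by linarith) (by positivity) (by linarith)]
  refine le_trans ?_ (ENNReal.le_tsum 0)
  rw [powerMeasure_closedBall (by linarith) (by positivity) (by push_cast; linarith)]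
  simp only [Nat.cast_zero, zero_add, one_mul]
  gcongr
  exact tailGap_three_pi_div_eight_le hq hq1

lemma ofReal_mul_powerMeasure_abs_cos_lt_le {p s t : ℝ} (hp : 0 < p) (h0 : 0 < s) (hst : s ≤ t)
    (ht : t < π / 2) :
    ENNReal.ofReal ((π / 2 - s) / (π / 2 - t)) * powerMeasure p {u | |cos u| < cos t} ≤
      powerMeasure p {u | |cos u| < cos s} := by
  rw [powerMeasure_abs_cos_lt (h0.le.trans hst) ht.le, powerMeasure_abs_cos_lt h0.le
    (hst.trans ht.le), ← ENNReal.tsum_mul_left]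
  refine ENNReal.tsum_le_tsum fun k => ?_
  rcases le_or_gt 0 k with hk | hk
  · have hk' : (0 : ℝ) ≤ k := mod_cast hk
    rw [powerMeasure_ball, powerMeasure_ball]
    exact powerMeasure_closedBall_ratio hp (by linarith) (by linarith)
      (by linarith [mul_nonneg hk' pi_pos.le])
  · have hk' : (k : ℝ) + 1 ≤ 0 := mod_cast hk
    have hsub : Metric.ball ((k + 1 / 2) * π) (π / 2 - t) ⊆ Set.Iic 0 := fun u hu => by
      rw [Real.ball_eq_Ioo] at hu
      have := mul_nonpos_of_nonpos_of_nonneg hk' pi_pos.le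
      exact Set.mem_Iic.2 (by linarith [hu.2])
    rw [measure_mono_null hsub powerMeasure_Iic_zero, mul_zero]
    exact zero_le

lemma mul_radiusSq_rpow_le {q τ : ℝ} (hq : 0 ≤ q) (hq1 : q ≤ 1) (h0 : 3 * π / 8 ≤ τ)
    (h1 : τ < π / 2) :
    (π / 2 - τ) * radiusSq τ ^ q ≤ π / 8 * radiusSq (3 * π / 8) ^ q := by
  have hs : 0 < π / 2 - τ := by linarith
  have hr := radiusSq_pos (t := 3 * π / 8) (by positivity) (by linarith [pi_pos])
  have hr' := radiusSq_pos (t := τ) (by linarith [pi_pos]) h1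
  have hmono : (π / 2 - τ) * radiusSq τ ≤ π / 8 * radiusSq (3 * π / 8) := by
    have := monotoneOn_mul_radiusSq_pi_div_two_sub ⟨hs, by linarith⟩ ⟨by positivity, le_rfl⟩
      (by linarith : π / 2 - τ ≤ π / 8)
    simpa only [sub_sub_cancel, show π / 2 - π / 8 = 3 * π / 8 by ring] using this
  have hsplit {x y : ℝ} (hx : 0 < x) (hy : 0 ≤ y) : x * y ^ q = x ^ (1 - q) * (x * y) ^ q := by
    rw [mul_rpow hx.le hy, ← mul_assoc, ← rpow_add hx, sub_add_cancel, rpow_one]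
  rw [hsplit hs hr'.le, hsplit (by positivity) hr.le]
  gcongr
  linarith

lemma powerMeasure_abs_cos_lt_le_of_three_pi_div_eight_le {q τ : ℝ} (hq : 7 / 8 ≤ q)
    (hq1 : q ≤ 1) (h0 : 3 * π / 8 ≤ τ) (h1 : τ < π / 2) :
    powerMeasure (2 * q) {u | |cos u| < cos τ} ≤
      powerMeasure (2 * q) {u | exp (-u ^ 2 / 2) < cos τ} := by
  have hs : 0 < π / 2 - τ := by linarith
  have hr := radiusSq_pos (t := 3 * π / 8) (by positivity) (by linarith)
  have hr' := radiusSq_pos (t := τ) (by linarith [pi_pos]) h1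
  have hc : 0 < (π / 2 - 3 * π / 8) / (π / 2 - τ) := div_pos (by linarith [pi_pos]) hs
  rw [← ENNReal.mul_le_mul_iff_right (ENNReal.ofReal_pos.2 hc).ne' ENNReal.ofReal_ne_top]
  refine (ofReal_mul_powerMeasure_abs_cos_lt_le (by linarith) (by positivity) h0 h1).trans
    ((powerMeasure_abs_cos_lt_cos_three_pi_div_eight_le hq hq1).trans ?_)
  rw [powerMeasure_exp_lt (by linarith) (by positivity) (by linarith),
    powerMeasure_exp_lt (by linarith) (by linarith [pi_pos]) h1, ← ENNReal.ofReal_mul hc.le,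
    mul_div_assoc']
  gcongr
  rw [rpow_neg hr.le, rpow_neg hr'.le, ← div_eq_mul_inv, div_div, inv_eq_one_div,
    div_le_div_iff₀ (by positivity) (by positivity), one_mul]
  linarith [mul_radiusSq_rpow_le (by linarith) hq1 h0 h1]

lemma powerMeasure_abs_cos_lt_le_of_le {q s t : ℝ} (hq : 7 / 8 ≤ q) (hq1 : q ≤ 1) (hs : 0 < s)
    (hst : s ≤ t) (ht : t < π / 2)
    (h : powerMeasure (2 * q) {u | |cos u| < cos s} ≤
      powerMeasure (2 * q) {u | exp (-u ^ 2 / 2) < cos s}) :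
    powerMeasure (2 * q) {u | |cos u| < cos t} ≤
      powerMeasure (2 * q) {u | exp (-u ^ 2 / 2) < cos t} := by
  have hq0 : 0 < q := by linarith
  have ht0 : 0 < t := hs.trans_le hst
  rcases le_or_gt (3 * π / 8) t with h8 | h8
  · exact powerMeasure_abs_cos_lt_le_of_three_pi_div_eight_le hq hq1 h8 ht
  rw [powerMeasure_abs_cos_lt_le_iff hq0 hs (by linarith)] at h
  rw [powerMeasure_abs_cos_lt_le_iff hq0 ht0 ht]
  have hgap : tailGap q t ≤ t / s * tailGap q s := by
    have := antitoneOn_tailGap_div_self hq hq1 ⟨hs, hst.trans h8.le⟩ ⟨ht0, h8.le⟩ hst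
    rw [div_le_iff₀ ht0] at this
    exact this.trans_eq (by ring)
  calc ENNReal.ofReal (tailGap q t / (2 * q))
      ≤ ENNReal.ofReal (t / s * (tailGap q s / (2 * q))) := by
        rw [mul_div_assoc']
        gcongr
    _ = ENNReal.ofReal (t / s) * ENNReal.ofReal (tailGap q s / (2 * q)) :=
        ENNReal.ofReal_mul (by positivity)
    _ ≤ ENNReal.ofReal (t / s) *
        ∑' k : ℕ, powerMeasure (2 * q) (Metric.closedBall ((k + 1) * π) s) := by gcongr
    _ ≤ ∑' k : ℕ, powerMeasure (2 * q) (Metric.closedBall ((k + 1) * π) t) := by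
        rw [← ENNReal.tsum_mul_left]
        refine ENNReal.tsum_le_tsum fun k =>
          powerMeasure_closedBall_ratio (by positivity) hs hst ?_
        have : (0 : ℝ) ≤ k * π := by positivity
        linarith

lemma lintegral_one_sub_rpow {α : Type*} [MeasurableSpace α] {μ : Measure α} {f : α → ℝ}
    (hf : Measurable f) (h0 : ∀ u, 0 ≤ f u) (h1 : ∀ u, f u ≤ 1) {s : ℝ} (hs : 1 ≤ s) :
    ∫⁻ u, ENNReal.ofReal (1 - f u ^ s) ∂μ =
      ∫⁻ t in Set.Ioi 0, μ {u | f u < 1 - t} * ENNReal.ofReal (s * (1 - t)⁺ ^ (s - 1)) := by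
  have hint (u : α) : ∫ t in 0..1 - f u, s * (1 - t)⁺ ^ (s - 1) = 1 - f u ^ s := by
    have hcongr : Set.EqOn (fun t => s * (1 - t)⁺ ^ (s - 1)) (fun t => s * (1 - t) ^ (s - 1))
        (Set.uIcc 0 (1 - f u)) := by
      intro t ht
      rw [Set.uIcc_of_le (sub_nonneg.2 (h1 u))] at ht
      simp only [posPart_of_nonneg (by linarith [ht.2, h0 u] : 0 ≤ 1 - t)]
    rw [intervalIntegral.integral_congr hcongr, intervalIntegral.integral_const_mul,
      intervalIntegral.integral_comp_sub_left (fun t => t ^ (s - 1)), sub_sub_cancel, sub_zero,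
      integral_rpow (Or.inl (by linarith)), sub_add_cancel, one_rpow,
      mul_div_cancel₀ _ (by linarith)]
  have hcont : Continuous fun t : ℝ => s * (1 - t)⁺ ^ (s - 1) :=
    continuous_const.mul <| (continuous_posPart.comp (continuous_sub_left 1)).rpow_const
      fun _ => Or.inr (sub_nonneg.2 hs)
  rw [← lintegral_congr fun u => congrArg ENNReal.ofReal (hint u),
    lintegral_comp_eq_lintegral_meas_lt_mul μ (Eventually.of_forall fun u => sub_nonneg.2 (h1 u))
      (by fun_prop) (fun t _ => hcont.intervalIntegrable 0 t) (Eventually.of_forall fun t => ?_)]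
  · simp only [lt_sub_comm]
  · exact mul_nonneg (zero_le_one.trans hs) (rpow_nonneg (posPart_nonneg _) _)

lemma setLIntegral_mul_le_of_single_crossing {α : Type*} [LinearOrder α] [MeasurableSpace α]
    {ν : Measure α} {I : Set α} {h A B : α → ENNReal} (hh : Measurable h) (hA : Measurable A)
    (hB : Measurable B) (hanti : AntitoneOn h I) {C : ENNReal} (hC : C ≠ ⊤)
    (hle : ∀ y ∈ I, h y ≤ C)
    (hcross : ∀ y ∈ I, ∀ z ∈ I, y ≤ z → B y < A y → B z ≤ A z)
    (hint : ∫⁻ y in I, A y ∂ν ≤ ∫⁻ y in I, B y ∂ν) (hfin : ∫⁻ y in I, B y ∂ν ≠ ⊤) :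
    ∫⁻ y in I, h y * A y ∂ν ≤ ∫⁻ y in I, h y * B y ∂ν := by
  -- Compare `h` with its supremum `c` over the region where `B < A`.
  set c : ENNReal := ⨆ y ∈ {y ∈ I | B y < A y}, h y
  have hc_top : c ≠ ⊤ := ne_top_of_le_ne_top hC (iSup₂_le fun y hy => hle y hy.1)
  have hswap {a b P Q : ENNReal} (hab : a ≤ b) (hPQ : P ≤ Q) : a * Q + b * P ≤ a * P + b * Q := by
    obtain ⟨d, rfl⟩ := exists_add_of_le hab
    calc a * Q + (a + d) * P = a * Q + a * P + d * P := by ring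
      _ ≤ a * Q + a * P + d * Q := by gcongr
      _ = a * P + (a + d) * Q := by ring
  have hpoint : ∀ y ∈ I, h y * A y + c * B y ≤ h y * B y + c * A y := by
    intro y hy
    rcases lt_or_ge (B y) (A y) with hBA | hAB
    · exact hswap (le_iSup₂_of_le y ⟨hy, hBA⟩ le_rfl) hBA.le
    rcases hAB.eq_or_lt with heq | hlt
    · rw [heq]
    have hch : c ≤ h y := iSup₂_le fun z hz => hanti hy hz.1 <| by
      by_contra! hzy
      exact (hcross z hz.1 y hy hzy.le hz.2).not_gt hlt
    rw [add_comm, add_comm (h y * B y)]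
    exact hswap hch hlt.le
  have hmono := setLIntegral_mono (μ := ν) (by fun_prop) hpoint
  rw [lintegral_add_left (by fun_prop), lintegral_add_left (by fun_prop),
    lintegral_const_mul _ hA, lintegral_const_mul _ hB] at hmono
  rw [← ENNReal.add_le_add_iff_right (ENNReal.mul_ne_top hc_top hfin)]
  exact hmono.trans (by gcongr)

lemma lintegral_one_sub_rpow_le_of_single_crossing {α : Type*} [MeasurableSpace α]
    {μ : Measure α} {f g : α → ℝ} (hf : Measurable f) (hf0 : ∀ u, 0 ≤ f u) (hf1 : ∀ u, f u ≤ 1)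
    (hg : Measurable g) (hg0 : ∀ u, 0 ≤ g u) (hg1 : ∀ u, g u ≤ 1) {r s : ℝ} (hr : 1 ≤ r)
    (hrs : r ≤ s)
    (hcross : ∀ y z, 0 < y → y ≤ z → z < 1 → μ {u | g u < z} ≤ μ {u | f u < z} →
      μ {u | g u < y} ≤ μ {u | f u < y})
    (hle : ∫⁻ u, ENNReal.ofReal (1 - f u ^ r) ∂μ ≤ ∫⁻ u, ENNReal.ofReal (1 - g u ^ r) ∂μ)
    (hfin : ∫⁻ u, ENNReal.ofReal (1 - g u ^ r) ∂μ ≠ ⊤) :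
    ∫⁻ u, ENNReal.ofReal (1 - f u ^ s) ∂μ ≤ ∫⁻ u, ENNReal.ofReal (1 - g u ^ s) ∂μ := by
  rw [lintegral_one_sub_rpow hf hf0 hf1 hr, lintegral_one_sub_rpow hg hg0 hg1 hr] at hle
  rw [lintegral_one_sub_rpow hg hg0 hg1 hr] at hfin
  rw [lintegral_one_sub_rpow hf hf0 hf1 (hr.trans hrs),
    lintegral_one_sub_rpow hg hg0 hg1 (hr.trans hrs)]
  have hmeas (f : α → ℝ) : Measurable fun t => μ {u | f u < 1 - t} :=
    Antitone.measurable fun y z hyz => measure_mono fun u (hu : f u < 1 - z) =>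
      show f u < 1 - y by linarith
  have : 0 < r := by linarith
  have hs0 : 0 < s := by linarith
  set h : ℝ → ENNReal := fun t => ENNReal.ofReal (s / r * (1 - t)⁺ ^ (s - r))
  have hweight (t : ℝ) : ENNReal.ofReal (s * (1 - t)⁺ ^ (s - 1)) =
      h t * ENNReal.ofReal (r * (1 - t)⁺ ^ (r - 1)) := by
    have : 0 ≤ (1 - t)⁺ ^ (s - r) := rpow_nonneg (posPart_nonneg _) _
    rw [← ENNReal.ofReal_mul (by positivity), show s - 1 = (s - r) + (r - 1) by ring,
      rpow_add_of_nonneg (posPart_nonneg _) (by linarith) (by linarith)]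
    congr 1
    field_simp
  have hanti : AntitoneOn h (Set.Ioi 0) := fun y _ z _ hyz => by
    refine ENNReal.ofReal_le_ofReal (mul_le_mul_of_nonneg_left ?_ (by positivity))
    exact rpow_le_rpow (posPart_nonneg _) (posPart_mono (by linarith)) (by linarith)
  have hbound (t : ℝ) (ht : t ∈ Set.Ioi 0) : h t ≤ ENNReal.ofReal (s / r) := by
    refine ENNReal.ofReal_le_ofReal (mul_le_of_le_one_right (by positivity) ?_)
    refine rpow_le_one (posPart_nonneg _) ?_ (by linarith)
    exact sup_le (by linarith [Set.mem_Ioi.1 ht]) zero_le_one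
  simp only [hweight, mul_left_comm _ (h _)]
  refine setLIntegral_mul_le_of_single_crossing (by fun_prop) ((hmeas f).mul (by fun_prop))
    ((hmeas g).mul (by fun_prop)) hanti ENNReal.ofReal_ne_top hbound ?_ hle hfin
  intro y hy z _ hyz hlt
  rcases le_or_gt 1 z with h1 | h1
  · have : {u | g u < 1 - z} = ∅ := by
      ext u
      simpa using (sub_nonpos.2 h1).trans (hg0 u)
    simp only [this, measure_empty, zero_mul, zero_le]
  · exact mul_le_mul' (hcross _ _ (sub_pos.2 h1) (by linarith) (sub_lt_self 1 hy)
      (lt_of_mul_lt_mul_right' hlt).le) le_rfl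

lemma lintegral_one_sub_exp_le_one_sub_abs_cos_rpow {q r s : ℝ} (hq : 7 / 8 ≤ q) (hq1 : q ≤ 1)
    (hr : 1 ≤ r) (hrs : r ≤ s)
    (hle : ∫⁻ u, ENNReal.ofReal (1 - exp (-r * u ^ 2 / 2)) ∂powerMeasure (2 * q) ≤
      ∫⁻ u, ENNReal.ofReal (1 - |cos u| ^ r) ∂powerMeasure (2 * q))
    (hfin : ∫⁻ u, ENNReal.ofReal (1 - |cos u| ^ r) ∂powerMeasure (2 * q) ≠ ⊤) :
    ∫⁻ u, ENNReal.ofReal (1 - exp (-s * u ^ 2 / 2)) ∂powerMeasure (2 * q) ≤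
      ∫⁻ u, ENNReal.ofReal (1 - |cos u| ^ s) ∂powerMeasure (2 * q) := by
  have hexp (s u : ℝ) : exp (-s * u ^ 2 / 2) = exp (-u ^ 2 / 2) ^ s := by
    rw [← exp_mul]
    congr 1
    ring
  simp only [hexp] at hle ⊢
  refine lintegral_one_sub_rpow_le_of_single_crossing (g := fun u => |cos u|) (by fun_prop)
    (fun u => (exp_pos _).le) (fun u => exp_le_one_iff.2 (by linarith [sq_nonneg u]))
    (by fun_prop) (fun u => abs_nonneg _) abs_cos_le_one hr hrs ?_ hle hfin
  intro y z hy hyz hz h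
  rw [← cos_arccos (by linarith) hz.le] at h
  rw [← cos_arccos (by linarith) (hyz.trans hz.le)]
  exact powerMeasure_abs_cos_lt_le_of_le hq hq1 (arccos_pos.2 hz) (arccos_le_arccos hyz)
    (arccos_lt_pi_div_two.2 hy) h

/-! ### Integral representations of absolute moments -/

/-- The integral of `(1 - cos u) * u ^ (-p - 1)` over the positive half-line: the constant in the
representation of `|x| ^ p` as an integral of `1 - cos (x * u)`. -/
noncomputable def oneSubCosMass (p : ℝ) : ENNReal :=
  ∫⁻ u, ENNReal.ofReal (1 - cos u) ∂powerMeasure p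

lemma oneSubCosMass_ne_zero {p : ℝ} (hp : 0 < p) : oneSubCosMass p ≠ 0 := by
  have hle : powerMeasure p (Set.Ioc (π / 2) π) ≤ oneSubCosMass p := by
    rw [← setLIntegral_one]
    refine (setLIntegral_mono (by fun_prop) fun u hu => ?_).trans (setLIntegral_le_lintegral _ _)
    rw [ENNReal.one_le_ofReal]
    linarith [cos_nonpos_of_pi_div_two_le_of_le hu.1.le (by linarith [hu.2, pi_pos])]
  refine (lt_of_lt_of_le ?_ hle).ne'
  rw [powerMeasure_Ioc hp (by positivity) (by linarith [pi_pos]), ENNReal.ofReal_pos]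
  exact div_pos (sub_pos.2 (rpow_lt_rpow_of_neg (by positivity) (by linarith [pi_pos])
    (neg_lt_zero.2 hp))) hp

lemma rpow_mul_one_sub_cos_le {p u : ℝ} (hu : 0 < u) :
    u ^ (-p - 1) * (1 - cos u) ≤ u ^ (1 - p) := by
  calc u ^ (-p - 1) * (1 - cos u) ≤ u ^ (-p - 1) * u ^ 2 := by
        gcongr
        linarith [one_sub_sq_div_two_le_cos (x := u), sq_nonneg u]
    _ = u ^ (1 - p) := by
        rw [← rpow_two, ← rpow_add hu]
        congr 1
        ring

lemma oneSubCosMass_ne_top {p : ℝ} (hp : 0 < p) (hp2 : p < 2) : oneSubCosMass p ≠ ⊤ := by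
  rw [oneSubCosMass, lintegral_powerMeasure (by fun_prop), ← Set.Ioc_union_Ioi_eq_Ioi zero_le_one]
  refine ne_top_of_le_ne_top (ENNReal.add_ne_top.2 ⟨?_, ?_⟩) (lintegral_union_le _ _ _)
  · have hint : IntegrableOn (fun u : ℝ => u ^ (1 - p)) (Set.Ioc 0 1) := by
      rw [← intervalIntegrable_iff_integrableOn_Ioc_of_le zero_le_one]
      exact intervalIntegral.intervalIntegrable_rpow' (by linarith)
    refine ne_top_of_le_ne_top hint.lintegral_lt_top.ne
      (setLIntegral_mono (by fun_prop) fun u hu => ?_)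
    rw [← ENNReal.ofReal_mul (rpow_nonneg hu.1.le _)]
    exact ENNReal.ofReal_le_ofReal (rpow_mul_one_sub_cos_le hu.1)
  · have hint : IntegrableOn (fun u : ℝ => u ^ (-p - 1) * 2) (Set.Ioi 1) :=
      (integrableOn_Ioi_rpow_of_lt (by linarith) one_pos).mul_const 2
    refine ne_top_of_le_ne_top hint.lintegral_lt_top.ne
      (setLIntegral_mono (by fun_prop) fun u hu => ?_)
    have hu0 : 0 < u := one_pos.trans hu
    rw [← ENNReal.ofReal_mul (by positivity)]
    gcongr
    linarith [neg_one_le_cos u]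

lemma lintegral_one_sub_cos_mul {p : ℝ} (hp : 0 < p) (x : ℝ) :
    ∫⁻ u, ENNReal.ofReal (1 - cos (x * u)) ∂powerMeasure p =
      ENNReal.ofReal (|x| ^ p) * oneSubCosMass p := by
  rcases eq_or_ne x 0 with rfl | hx
  · simp [zero_rpow hp.ne']
  · rw [oneSubCosMass, ← lintegral_powerMeasure_comp_mul (abs_pos.2 hx) (by fun_prop)]
    refine lintegral_congr fun u => ?_
    rw [← cos_abs, abs_mul, ← cos_abs (|x| * u), abs_mul, abs_abs]

/-- The absolute moment of order `2 * q` of a standard Gaussian. -/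
noncomputable def gaussMoment (q : ℝ) : ℝ := 2 ^ q * Real.Gamma (q + 1 / 2) / √π

lemma gaussMoment_pos {q : ℝ} (hq : 0 < q) : 0 < gaussMoment q := by
  have := Real.Gamma_pos_of_pos (s := q + 1 / 2) (by positivity)
  unfold gaussMoment
  positivity

lemma integral_abs_rpow_gaussianReal {q : ℝ} (hq : 0 < q) :
    ∫ x, |x| ^ (2 * q) ∂ProbabilityTheory.gaussianReal 0 1 = gaussMoment q := by
  rw [ProbabilityTheory.integral_gaussianReal_eq_integral_smul one_ne_zero]
  have hdensity (x : ℝ) : ProbabilityTheory.gaussianPDFReal 0 1 x • |x| ^ (2 * q) =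
      (√(2 * π))⁻¹ * (|x| ^ (2 * q) * exp (-(1 / 2) * |x| ^ (2 : ℝ))) := by
    rw [ProbabilityTheory.gaussianPDFReal, smul_eq_mul, rpow_two, sq_abs]
    simp only [NNReal.coe_one, mul_one, sub_zero]
    rw [show -x ^ 2 / 2 = -(1 / 2) * x ^ 2 by ring]
    ring
  simp_rw [hdensity]
  rw [integral_const_mul,
    integral_comp_abs (f := fun x => x ^ (2 * q) * exp (-(1 / 2) * x ^ (2 : ℝ))),
    integral_rpow_mul_exp_neg_mul_rpow two_pos (by linarith) (by norm_num), gaussMoment,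
    show (2 * q + 1) / 2 = q + 1 / 2 by ring, show -(2 * q + 1) / 2 = -(q + 1 / 2) by ring,
    one_div, inv_rpow zero_le_two, rpow_neg zero_le_two, inv_inv, rpow_add two_pos,
    sqrt_mul zero_le_two, sqrt_eq_rpow 2, one_div]
  have := sqrt_pos.2 pi_pos
  have : (0 : ℝ) < 2 ^ (2⁻¹ : ℝ) := by positivity
  field_simp

lemma lintegral_abs_rpow_gaussianReal {q : ℝ} (hq : 0 < q) :
    ∫⁻ x, ENNReal.ofReal (|x| ^ (2 * q)) ∂ProbabilityTheory.gaussianReal 0 1 =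
      ENNReal.ofReal (gaussMoment q) := by
  have h := integral_abs_rpow_gaussianReal hq
  rw [← h, ofReal_integral_eq_lintegral_ofReal]
  · exact not_imp_comm.1 integral_undef (h.trans_ne (gaussMoment_pos hq).ne')
  · exact Eventually.of_forall fun x => by positivity

lemma integrable_cos_mul_gaussianReal (x : ℝ) :
    Integrable (fun g => cos (g * x)) (ProbabilityTheory.gaussianReal 0 1) :=
  Integrable.of_bound (C := 1) (by fun_prop) (Eventually.of_forall fun g => abs_cos_le_one _)

lemma integral_cos_mul_gaussianReal (x : ℝ) :
    ∫ g, cos (g * x) ∂ProbabilityTheory.gaussianReal 0 1 = exp (-x ^ 2 / 2) := by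
  have hint : Integrable (fun g : ℝ => Complex.exp (x * g * Complex.I))
      (ProbabilityTheory.gaussianReal 0 1) := by
    refine Integrable.of_bound (C := 1) (by fun_prop) (Eventually.of_forall fun g => ?_)
    rw [← Complex.ofReal_mul, Complex.norm_exp_ofReal_mul_I]
  have hre (g : ℝ) : (Complex.exp (x * g * Complex.I)).re = cos (g * x) := by
    rw [← Complex.ofReal_mul, Complex.exp_ofReal_mul_I_re, mul_comm]
  have hchar := ProbabilityTheory.charFun_gaussianReal (μ := 0) (v := 1) x
  have hcomm := Complex.reCLM.integral_comp_comm hint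
  rw [charFun_apply_real] at hchar
  simp only [Complex.reCLM_apply, hre] at hcomm
  rw [hcomm, hchar, ← Complex.exp_ofReal_re]
  congr 2
  push_cast
  ring

lemma lintegral_one_sub_cos_mul_gaussianReal (x : ℝ) :
    ∫⁻ g, ENNReal.ofReal (1 - cos (g * x)) ∂ProbabilityTheory.gaussianReal 0 1 =
      ENNReal.ofReal (1 - exp (-x ^ 2 / 2)) := by
  have hint := integrable_cos_mul_gaussianReal x
  rw [← integral_cos_mul_gaussianReal, ← ofReal_integral_eq_lintegral_ofReal]
  · rw [integral_sub (integrable_const _) hint, integral_const, probReal_univ, one_smul]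
  · exact (integrable_const _).sub hint
  · exact Eventually.of_forall fun g => sub_nonneg.2 (cos_le_one _)

lemma lintegral_one_sub_exp {q s : ℝ} (hq : 0 < q) (hs : 0 ≤ s) :
    ∫⁻ u, ENNReal.ofReal (1 - exp (-s * u ^ 2 / 2)) ∂powerMeasure (2 * q) =
      ENNReal.ofReal (s ^ q * gaussMoment q) * oneSubCosMass (2 * q) := by
  have hgauss (u : ℝ) : ENNReal.ofReal (1 - exp (-s * u ^ 2 / 2)) =
      ∫⁻ g, ENNReal.ofReal (1 - cos (√s * g * u)) ∂ProbabilityTheory.gaussianReal 0 1 := by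
    simp only [mul_comm √s, mul_comm s, mul_assoc, lintegral_one_sub_cos_mul_gaussianReal, mul_pow,
      sq_sqrt hs, neg_mul]
  have hscale (g : ℝ) : |√s * g| ^ (2 * q) = s ^ q * |g| ^ (2 * q) := by
    rw [abs_mul, mul_rpow (abs_nonneg _) (abs_nonneg _), abs_of_nonneg (sqrt_nonneg s),
      sqrt_eq_rpow, ← rpow_mul hs, ← mul_assoc, one_div_mul_cancel two_ne_zero, one_mul]
  simp_rw [hgauss]
  rw [lintegral_lintegral_swap (by fun_prop)]
  simp_rw [lintegral_one_sub_cos_mul (p := 2 * q) (by positivity), hscale,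
    ENNReal.ofReal_mul (rpow_nonneg hs q), mul_assoc]
  rw [lintegral_const_mul' _ _ ENNReal.ofReal_ne_top, lintegral_mul_const _ (by fun_prop),
    lintegral_abs_rpow_gaussianReal hq]

lemma lintegral_one_sub_abs_cos_rpow_two {p : ℝ} (hp : 0 < p) :
    ∫⁻ u, ENNReal.ofReal (1 - |cos u| ^ (2 : ℝ)) ∂powerMeasure p =
      ENNReal.ofReal (2 ^ (p - 1)) * oneSubCosMass p := by
  have hdouble (u : ℝ) : ENNReal.ofReal (1 - |cos u| ^ (2 : ℝ)) =
      ENNReal.ofReal (1 / 2) * ENNReal.ofReal (1 - cos (2 * u)) := by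
    rw [← ENNReal.ofReal_mul (by norm_num), cos_two_mul, rpow_two, sq_abs]
    congr 1
    ring
  simp_rw [hdouble]
  rw [lintegral_const_mul _ (by fun_prop), lintegral_one_sub_cos_mul hp, ← mul_assoc,
    ← ENNReal.ofReal_mul (by norm_num), rpow_sub_one two_ne_zero, abs_two, one_div_mul_eq_div]

lemma two_mul_gaussMoment_le {q : ℝ} (hG : Real.Gamma (q + 1 / 2) ≤ √π / 2) :
    2 * gaussMoment q ≤ 2 ^ q := by
  have := sqrt_pos.2 pi_pos
  calc 2 * gaussMoment q ≤ 2 * (2 ^ q * (√π / 2) / √π) := by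
        unfold gaussMoment
        gcongr
    _ = 2 ^ q := by field_simp

lemma gaussMoment_mul_oneSubCosMass_le {q s : ℝ} (hq : 7 / 8 ≤ q) (hq1 : q < 1)
    (hG : Real.Gamma (q + 1 / 2) ≤ √π / 2) (hs : 2 ≤ s) :
    ENNReal.ofReal (s ^ q * gaussMoment q) * oneSubCosMass (2 * q) ≤
      ∫⁻ u, ENNReal.ofReal (1 - |cos u| ^ s) ∂powerMeasure (2 * q) := by
  have hq0 : 0 < q := by linarith
  rw [← lintegral_one_sub_exp hq0 (by linarith)]
  refine lintegral_one_sub_exp_le_one_sub_abs_cos_rpow hq hq1.le one_le_two hs ?_ ?_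
  · rw [lintegral_one_sub_exp hq0 zero_le_two, lintegral_one_sub_abs_cos_rpow_two (by positivity)]
    gcongr
    rw [rpow_sub_one two_ne_zero, two_mul, rpow_add two_pos, mul_div_assoc]
    gcongr
    linarith [two_mul_gaussMoment_le hG]
  · rw [lintegral_one_sub_abs_cos_rpow_two (by positivity)]
    exact ENNReal.mul_ne_top ENNReal.ofReal_ne_top
      (oneSubCosMass_ne_top (by positivity) (by linarith))

lemma gaussMoment_mul_rpow_mul_oneSubCosMass_le {q a v : ℝ} (hq : 7 / 8 ≤ q) (hq1 : q < 1)
    (hG : Real.Gamma (q + 1 / 2) ≤ √π / 2) (ha : a ≠ 0) (h : 2 * a ^ 2 ≤ v) :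
    ENNReal.ofReal (gaussMoment q * v ^ q) * oneSubCosMass (2 * q) ≤
      ∫⁻ t, ENNReal.ofReal (1 - |cos (a * t)| ^ (a ^ 2 / v)⁻¹) ∂powerMeasure (2 * q) := by
  have ha0 : 0 < |a| := abs_pos.2 ha
  have hv : 0 ≤ v := by linarith [sq_nonneg a]
  have hscale : gaussMoment q * v ^ q = |a| ^ (2 * q) * ((v / a ^ 2) ^ q * gaussMoment q) := by
    rw [div_rpow hv (sq_nonneg a), ← sq_abs a, rpow_mul ha0.le, rpow_two]
    field_simp
  rw [inv_div]
  calc _ = ENNReal.ofReal (|a| ^ (2 * q)) *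
        (ENNReal.ofReal ((v / a ^ 2) ^ q * gaussMoment q) * oneSubCosMass (2 * q)) := by
        rw [hscale, ENNReal.ofReal_mul (by positivity), mul_assoc]
    _ ≤ ENNReal.ofReal (|a| ^ (2 * q)) *
        ∫⁻ t, ENNReal.ofReal (1 - |cos t| ^ (v / a ^ 2)) ∂powerMeasure (2 * q) := by
        gcongr
        exact gaussMoment_mul_oneSubCosMass_le hq hq1 hG (by rwa [le_div_iff₀ (by positivity)])
    _ = _ := by
        rw [← lintegral_powerMeasure_comp_mul ha0 (by fun_prop)]
        refine lintegral_congr fun t => ?_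
        rw [← cos_abs (a * t), ← cos_abs (|a| * t), abs_mul a, abs_mul |a|, abs_abs]

/-! ### Sign averages -/

/-- The average of `f` over all points `c ± a₁ ± ⋯ ± aₙ`, where `a₁, …, aₙ` are the entries of the
list: the expectation of `f (c + ∑ εᵢ aᵢ)` over independent random signs, set up for induction. -/
noncomputable def signAverage {V : Type*} [AddCommGroup V] (f : V → ℝ) : List V → V → ℝ
  | [], c => f c
  | a :: l, c => (signAverage f l (c + a) + signAverage f l (c - a)) / 2

section SignAverage

variable {V : Type*} [AddCommGroup V]

lemma signAverage_mono {f g : V → ℝ} (h : ∀ x, f x ≤ g x) :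
    ∀ (l : List V) (c : V), signAverage f l c ≤ signAverage g l c
  | [], c => h c
  | a :: l, c => by
    simp only [signAverage]
    linarith [signAverage_mono h l (c + a), signAverage_mono h l (c - a)]

lemma signAverage_const (k : ℝ) : ∀ (l : List V) (c : V), signAverage (fun _ => k) l c = k
  | [], _ => rfl
  | a :: l, c => by
    simp only [signAverage, signAverage_const k l]
    ring

lemma signAverage_nonneg {f : V → ℝ} (h : ∀ x, 0 ≤ f x) (l : List V) (c : V) :
    0 ≤ signAverage f l c :=
  (signAverage_const 0 l c).ge.trans (signAverage_mono h l c)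

lemma signAverage_add (f g : V → ℝ) :
    ∀ (l : List V) (c : V), signAverage (fun x => f x + g x) l c =
      signAverage f l c + signAverage g l c
  | [], _ => rfl
  | a :: l, c => by
    simp only [signAverage, signAverage_add f g l]
    ring

lemma signAverage_const_mul (k : ℝ) (f : V → ℝ) :
    ∀ (l : List V) (c : V), signAverage (fun x => k * f x) l c = k * signAverage f l c
  | [], _ => rfl
  | a :: l, c => by
    simp only [signAverage, signAverage_const_mul k f l]
    ring

lemma signAverage_const_sub (k : ℝ) (f : V → ℝ) (l : List V) (c : V) :
    signAverage (fun x => k - f x) l c = k - signAverage f l c := by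
  have h := signAverage_add (fun _ => k) (fun x => -1 * f x) l c
  rw [signAverage_const, signAverage_const_mul] at h
  simpa only [neg_one_mul, ← sub_eq_add_neg] using h

lemma signAverage_sum {ι : Type*} (s : Finset ι) (f : ι → V → ℝ) (l : List V) (c : V) :
    signAverage (fun x => ∑ i ∈ s, f i x) l c = ∑ i ∈ s, signAverage (f i) l c := by
  classical
  induction s using Finset.induction_on with
  | empty => simpa only [Finset.sum_empty] using signAverage_const 0 l c
  | insert i s hi ih => simp only [Finset.sum_insert hi, signAverage_add, ih]

lemma signAverage_comp {W : Type*} [AddCommGroup W] (φ : V →+ W) (f : W → ℝ) :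
    ∀ (l : List V) (c : V), signAverage (fun x => f (φ x)) l c = signAverage f (l.map φ) (φ c)
  | [], _ => rfl
  | a :: l, c => by
    simp only [signAverage, List.map_cons, signAverage_comp φ f l, map_add, map_sub]

lemma signAverage_eq_of_perm {f : V → ℝ} {l l' : List V} (h : l.Perm l') :
    ∀ c, signAverage f l c = signAverage f l' c := by
  induction h with
  | nil => exact fun _ => rfl
  | cons a _ ih => intro c; simp only [signAverage, ih]
  | swap a b l =>
    intro c
    simp only [signAverage]
    rw [add_right_comm c, sub_right_comm c, add_sub_right_comm c b a, add_sub_right_comm c a b]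
    ring
  | trans _ _ ih1 ih2 => exact fun c => (ih1 c).trans (ih2 c)

lemma signAverage_neg {f : V → ℝ} (hf : ∀ x, f (-x) = f x) :
    ∀ (l : List V) (c : V), signAverage f l (-c) = signAverage f l c
  | [], c => hf c
  | a :: l, c => by
    simp only [signAverage]
    rw [show -c + a = -(c - a) by abel, show -c - a = -(c + a) by abel, signAverage_neg hf l,
      signAverage_neg hf l]
    ring

lemma signAverage_cons_comm {f : V → ℝ} (hf : ∀ x, f (-x) = f x) (a : V) (l : List V) (c : V) :
    signAverage f (a :: l) c = signAverage f (c :: l) a := by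
  simp only [signAverage]
  rw [add_comm c a, ← signAverage_neg hf l (c - a), neg_sub]

lemma measurable_signAverage {α : Type*} [MeasurableSpace α] {f : V → α → ℝ}
    (hf : ∀ x, Measurable (f x)) :
    ∀ (l : List V) (c : V), Measurable fun t => signAverage (fun x => f x t) l c
  | [], c => hf c
  | a :: l, c =>
    ((measurable_signAverage hf l (c + a)).add (measurable_signAverage hf l (c - a))).div_const 2

lemma lintegral_ofReal_signAverage {α : Type*} [MeasurableSpace α] {μ : Measure α}
    {f : V → α → ℝ} {g : V → ℝ} {K : ENNReal} (hf : ∀ x, Measurable (f x))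
    (hf0 : ∀ x t, 0 ≤ f x t) (hg : ∀ x, 0 ≤ g x)
    (h : ∀ x, ∫⁻ t, ENNReal.ofReal (f x t) ∂μ = ENNReal.ofReal (g x) * K) :
    ∀ (l : List V) (c : V), ∫⁻ t, ENNReal.ofReal (signAverage (fun x => f x t) l c) ∂μ =
      ENNReal.ofReal (signAverage g l c) * K
  | [], c => h c
  | a :: l, c => by
    have hmeas (c : V) : Measurable fun t => ENNReal.ofReal (signAverage (fun x => f x t) l c) :=
      (measurable_signAverage hf l c).ennreal_ofReal
    have hf0' (t : α) (c : V) := signAverage_nonneg (fun x => hf0 x t) l c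
    simp only [signAverage]
    simp_rw [ENNReal.ofReal_div_of_pos two_pos,
      ENNReal.ofReal_add (hf0' _ (c + a)) (hf0' _ (c - a)),
      ENNReal.ofReal_add (signAverage_nonneg hg l (c + a)) (signAverage_nonneg hg l (c - a)),
      div_eq_mul_inv]
    rw [lintegral_mul_const' _ _ (by simp), lintegral_add_left (hmeas _),
      lintegral_ofReal_signAverage hf hf0 hg h l, lintegral_ofReal_signAverage hf hf0 hg h l]
    ring

end SignAverage

lemma signAverage_cos (t : ℝ) :
    ∀ (l : List ℝ) (c : ℝ), signAverage (fun x => cos (x * t)) l c =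
      ((c :: l).map fun a => cos (a * t)).prod
  | [], c => by simp [signAverage]
  | a :: l, c => by
    simp only [signAverage, signAverage_cos t l, List.map_cons, List.prod_cons]
    rw [add_mul, sub_mul, cos_add, cos_sub]
    ring

lemma signAverage_sq : ∀ (l : List ℝ) (c : ℝ), signAverage (fun x => x ^ 2) l c =
      ((c :: l).map fun a => a ^ 2).sum
  | [], c => by simp [signAverage]
  | a :: l, c => by
    simp only [signAverage, signAverage_sq l, List.map_cons, List.sum_cons]
    ring

lemma lintegral_one_sub_prod_cos {p : ℝ} (hp : 0 < p) (l : List ℝ) (c : ℝ) :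
    ∫⁻ t, ENNReal.ofReal (1 - ((c :: l).map fun a => cos (a * t)).prod) ∂powerMeasure p =
      ENNReal.ofReal (signAverage (fun x => |x| ^ p) l c) * oneSubCosMass p := by
  simp only [← signAverage_cos, ← signAverage_const_sub]
  exact lintegral_ofReal_signAverage (by fun_prop) (fun _ _ => sub_nonneg.2 (cos_le_one _))
    (fun _ => by positivity) (lintegral_one_sub_cos_mul hp) l c

lemma sum_weight_mul_one_sub_abs_cos_rpow_le {ι : Type*} [Fintype ι] {a w : ι → ℝ}
    (hw : ∀ i, 0 ≤ w i) (hw1 : ∑ i, w i = 1) (ha : ∀ i, w i = 0 → a i = 0) (t : ℝ) :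
    ∑ i, w i * (1 - |cos (a i * t)| ^ (w i)⁻¹) ≤ 1 - ∏ i, cos (a i * t) := by
  have hamgm := Real.geom_mean_le_arith_mean_weighted Finset.univ w
    (fun i => |cos (a i * t)| ^ (w i)⁻¹) (fun i _ => hw i) hw1 (fun i _ => by positivity)
  have hpow (i : ι) : (|cos (a i * t)| ^ (w i)⁻¹) ^ w i = |cos (a i * t)| := by
    rcases eq_or_ne (w i) 0 with h0 | h0
    · simp [h0, ha i h0]
    · rw [← rpow_mul (abs_nonneg _), inv_mul_cancel₀ h0, rpow_one]
  simp only [hpow, ← Finset.abs_prod] at hamgm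
  simp only [mul_sub, mul_one, Finset.sum_sub_distrib, hw1]
  linarith [le_abs_self (∏ i, cos (a i * t))]

lemma le_lintegral_one_sub_prod_cos {ι : Type*} [Fintype ι] {a w : ι → ℝ} {μ : Measure ℝ}
    {C : ENNReal} (hw : ∀ i, 0 ≤ w i) (hw1 : ∑ i, w i = 1) (ha : ∀ i, w i = 0 → a i = 0)
    (hC : ∀ i, w i ≠ 0 → C ≤ ∫⁻ t, ENNReal.ofReal (1 - |cos (a i * t)| ^ (w i)⁻¹) ∂μ) :
    C ≤ ∫⁻ t, ENNReal.ofReal (1 - ∏ i, cos (a i * t)) ∂μ := by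
  have hpow (i : ι) (t : ℝ) : 0 ≤ 1 - |cos (a i * t)| ^ (w i)⁻¹ :=
    sub_nonneg.2 (rpow_le_one (abs_nonneg _) (abs_cos_le_one _) (inv_nonneg.2 (hw i)))
  calc C = ∑ i, ENNReal.ofReal (w i) * C := by
        rw [← Finset.sum_mul, ← ENNReal.ofReal_sum_of_nonneg (fun i _ => hw i), hw1,
          ENNReal.ofReal_one, one_mul]
    _ ≤ ∑ i, ENNReal.ofReal (w i) *
          ∫⁻ t, ENNReal.ofReal (1 - |cos (a i * t)| ^ (w i)⁻¹) ∂μ := by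
        refine Finset.sum_le_sum fun i _ => ?_
        rcases eq_or_ne (w i) 0 with h0 | h0
        · simp [h0]
        · gcongr
          exact hC i h0
    _ = ∫⁻ t, ∑ i, ENNReal.ofReal (w i) *
          ENNReal.ofReal (1 - |cos (a i * t)| ^ (w i)⁻¹) ∂μ := by
        rw [lintegral_finsetSum _ (fun i _ => by fun_prop)]
        simp_rw [lintegral_const_mul' _ _ ENNReal.ofReal_ne_top]
    _ ≤ ∫⁻ t, ENNReal.ofReal (1 - ∏ i, cos (a i * t)) ∂μ := by
        refine lintegral_mono fun t => ?_
        simp only [← ENNReal.ofReal_mul (hw _)]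
        rw [← ENNReal.ofReal_sum_of_nonneg fun i _ => mul_nonneg (hw i) (hpow i t)]
        exact ENNReal.ofReal_le_ofReal (sum_weight_mul_one_sub_abs_cos_rpow_le hw hw1 ha t)

lemma gaussMoment_mul_sum_sq_rpow_le_signAverage_of_le {q : ℝ} (hq : 7 / 8 ≤ q) (hq1 : q < 1)
    (hG : Real.Gamma (q + 1 / 2) ≤ √π / 2) {l : List ℝ} {c : ℝ}
    (hl : ∀ a ∈ c :: l, 2 * a ^ 2 ≤ ((c :: l).map fun a => a ^ 2).sum) :
    gaussMoment q * (((c :: l).map fun a => a ^ 2).sum) ^ q ≤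
      signAverage (fun x => |x| ^ (2 * q)) l c := by
  have hq0 : 0 < q := by linarith
  have hnonneg := signAverage_nonneg (f := fun x => |x| ^ (2 * q)) (fun x => by positivity) l c
  have hmass := oneSubCosMass_ne_top (p := 2 * q) (by positivity) (by linarith)
  have hmass0 := oneSubCosMass_ne_zero (p := 2 * q) (by positivity)
  rw [← ENNReal.ofReal_le_ofReal_iff hnonneg, ← ENNReal.mul_le_mul_iff_left hmass0 hmass,
    ← lintegral_one_sub_prod_cos (by positivity)]
  generalize c :: l = m at hl
  have hsum : ∑ i : Fin m.length, m[i] ^ 2 = (m.map fun a => a ^ 2).sum :=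
    Fin.sum_univ_fun_getElem m (fun a => a ^ 2)
  have hprod (t : ℝ) : ∏ i : Fin m.length, cos (m[i] * t) = (m.map fun a => cos (a * t)).prod :=
    Fin.prod_univ_fun_getElem m (fun a => cos (a * t))
  simp only [← hprod]
  set v := (m.map fun a => a ^ 2).sum
  have hv0 : 0 ≤ v := hsum ▸ Finset.sum_nonneg fun i _ => sq_nonneg m[i]
  rcases hv0.eq_or_lt with hv | hv
  · simp [← hv, zero_rpow hq0.ne']
  refine le_lintegral_one_sub_prod_cos (w := fun i => m[i] ^ 2 / v) (fun i => by positivity)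
    (by rw [← Finset.sum_div, hsum, div_self hv.ne']) (fun i hi => ?_) fun i hi => ?_
  · simpa [hv.ne'] using hi
  · exact gaussMoment_mul_rpow_mul_oneSubCosMass_le hq hq1 hG (by simpa [hv.ne'] using hi)
      (hl _ (List.getElem_mem _))

/-! ### Convexity of powers and the two-point inequality -/

lemma add_le_add_of_concaveOn {s : Set ℝ} {f : ℝ → ℝ} (hf : ConcaveOn ℝ s f) {a b c d : ℝ}
    (ha : a ∈ s) (hd : d ∈ s) (hab : a ≤ b) (hac : a ≤ c) (h : a + d = b + c) :
    f a + f d ≤ f b + f c := by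
  rcases (show a ≤ d by linarith).eq_or_lt with rfl | had
  · rw [show b = a by linarith, show c = a by linarith]
  have hda : 0 < d - a := sub_pos.2 had
  have hsum : (d - b) / (d - a) + (d - c) / (d - a) = 1 := by field_simp; linarith
  have hwb : 0 ≤ (d - b) / (d - a) := div_nonneg (by linarith) hda.le
  have hwc : 0 ≤ (d - c) / (d - a) := div_nonneg (by linarith) hda.le
  have hb := hf.2 ha hd hwb hwc hsum
  have hc := hf.2 ha hd hwc hwb (by rw [add_comm, hsum])
  have hb' : (d - b) / (d - a) * a + (d - c) / (d - a) * d = b := by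
    field_simp
    rw [show c = a + d - b by linarith]
    ring
  have hc' : (d - c) / (d - a) * a + (d - b) / (d - a) * d = c := by
    field_simp
    rw [show b = a + d - c by linarith]
    ring
  simp only [smul_eq_mul, hb', hc'] at hb hc
  calc f a + f d = ((d - b) / (d - a) + (d - c) / (d - a)) * (f a + f d) := by rw [hsum, one_mul]
    _ ≤ f b + f c := by linarith

lemma rpow_add_rpow_le_of_add_eq {q a b c d : ℝ} (hq : 0 ≤ q) (hq1 : q ≤ 1) (ha : 0 ≤ a)
    (hab : a ≤ b) (hac : a ≤ c) (h : a + d = b + c) : a ^ q + d ^ q ≤ b ^ q + c ^ q :=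
  add_le_add_of_concaveOn (concaveOn_rpow hq hq1) ha (show 0 ≤ d by linarith) hab hac h

lemma nonneg_of_hasDerivAt_mul_antitoneOn {F F' h : ℝ → ℝ} (h0 : F 0 = 0) (h1 : F 1 = 0)
    (hF'0 : F' 0 = 0) (hc : ContinuousOn F (Set.Icc 0 1)) (hc' : ContinuousOn F' (Set.Ico 0 1))
    (hd : ∀ x ∈ Set.Ioo (0 : ℝ) 1, HasDerivAt F (F' x) x)
    (hd' : ∀ x ∈ Set.Ioo (0 : ℝ) 1, HasDerivAt F' (x * h x) x)
    (hanti : AntitoneOn h (Set.Ioo 0 1)) {b : ℝ} (hb : b ∈ Set.Icc 0 1) : 0 ≤ F b := by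
  by_contra! hneg
  have hb0 : 0 < b := hb.1.lt_of_ne (by rintro rfl; exact hneg.ne h0)
  have hb1 : b < 1 := hb.2.lt_of_ne (by rintro rfl; exact hneg.ne h1)
  obtain ⟨x, hx, hF'x⟩ : ∃ x ∈ Set.Ioo 0 b, F' x < 0 := by
    obtain ⟨x, hx, hslope⟩ := exists_hasDerivAt_eq_slope F F' hb0
      (hc.mono (Set.Icc_subset_Icc_right hb1.le)) fun y hy => hd y ⟨hy.1, hy.2.trans hb1⟩
    exact ⟨x, hx, hslope ▸ div_neg_of_neg_of_pos (by linarith) (by linarith)⟩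
  obtain ⟨y, hy, hF'y⟩ : ∃ y ∈ Set.Ioo b 1, 0 < F' y := by
    obtain ⟨y, hy, hslope⟩ := exists_hasDerivAt_eq_slope F F' hb1
      (hc.mono (Set.Icc_subset_Icc_left hb0.le)) fun y hy => hd y ⟨hb0.trans hy.1, hy.2⟩
    exact ⟨y, hy, hslope ▸ div_pos (by linarith) (by linarith)⟩
  obtain ⟨u, hu, hslope_u⟩ := exists_hasDerivAt_eq_slope F' (fun x => x * h x) hx.1
    (hc'.mono fun z hz => ⟨hz.1, hz.2.trans_lt (hx.2.trans hb1)⟩)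
    fun z hz => hd' z ⟨hz.1, hz.2.trans (hx.2.trans hb1)⟩
  obtain ⟨v, hv, hslope_v⟩ := exists_hasDerivAt_eq_slope F' (fun x => x * h x) (hx.2.trans hy.1)
    (hc'.mono fun z hz => ⟨hx.1.le.trans hz.1, hz.2.trans_lt hy.2⟩)
    fun z hz => hd' z ⟨hx.1.trans hz.1, hz.2.trans hy.2⟩
  have hhu : h u < 0 := by
    refine neg_of_mul_neg_right ?_ hu.1.le
    exact hslope_u ▸ div_neg_of_neg_of_pos (by linarith) (by linarith [hx.1])
  have hhv : 0 < h v := by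
    refine (pos_iff_pos_of_mul_pos ?_).1 (hx.1.trans hv.1)
    exact hslope_v ▸ div_pos (by linarith) (by linarith [hx.2, hy.1])
  have huv : u ≤ v := (hu.2.trans hv.1).le
  linarith [hanti ⟨hu.1, huv.trans_lt (hv.2.trans hy.2)⟩ ⟨hx.1.trans hv.1, hv.2.trans hy.2⟩ huv]

lemma monotoneOn_rpow_neg_sub_rpow_neg_div {p c : ℝ} (hp : 0 ≤ p) :
    MonotoneOn (fun x => ((c - x) ^ (-p) - (c + x) ^ (-p)) / x) (Set.Ioo 0 c) := by
  intro x hx y hy hxy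
  have hconv : ConvexOn ℝ (Set.Ico 0 c) _ := convexOn_rpow_neg_sub_rpow_neg hp
  simpa using hconv.secant_mono ⟨le_rfl, hx.1.trans hx.2⟩ (Set.Ioo_subset_Ico_self hx)
    (Set.Ioo_subset_Ico_self hy) hx.1.ne' hy.1.ne' hxy

/- The difference of the two sides vanishes at `0` and `1`, and its second derivative is `b` times
an antitone function. -/
lemma one_add_rpow_sub_one_sub_rpow_le {r b : ℝ} (hr : 0 < r) (hr1 : r ≤ 1)
    (hb : b ∈ Set.Icc 0 1) :
    (1 + b) ^ r - (1 - b) ^ r ≤ 2 * r * b + (2 ^ r - 2 * r) * b ^ 3 := by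
  have hadd (s x : ℝ) (hx : x ∈ Set.Ico 0 1) :=
    hasDerivAt_const_add_rpow (c := 1) s (x := x) (by linarith [hx.1])
  have hsub (s x : ℝ) (hx : x ∈ Set.Ico 0 1) := hasDerivAt_const_sub_rpow (c := 1) s hx.2
  have hF' (x : ℝ) (hx : x ∈ Set.Ico 0 1) : HasDerivAt
      (fun x => 2 * r + (2 ^ r - 2 * r) * (3 * x ^ 2) -
        (r * (1 + x) ^ (r - 1) - -r * (1 - x) ^ (r - 1)))
      ((2 ^ r - 2 * r) * (6 * x) -
        r * (1 - r) * ((1 - x) ^ (-(2 - r)) - (1 + x) ^ (-(2 - r)))) x := by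
    refine (((((hasDerivAt_pow 2 x).const_mul 3).const_mul (2 ^ r - 2 * r)).const_add (2 * r)).sub
      (((hadd (r - 1) x hx).const_mul r).sub
        ((hsub (r - 1) x hx).const_mul (-r)))).congr_deriv ?_
    rw [show r - 1 - 1 = -(2 - r) by ring]
    push_cast
    ring
  refine sub_nonneg.1 (nonneg_of_hasDerivAt_mul_antitoneOn
    (F := fun x => 2 * r * x + (2 ^ r - 2 * r) * x ^ 3 - ((1 + x) ^ r - (1 - x) ^ r))
    (h := fun x => 6 * (2 ^ r - 2 * r) -
      r * (1 - r) * (((1 - x) ^ (-(2 - r)) - (1 + x) ^ (-(2 - r))) / x))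
    (by simp) (by norm_num [zero_rpow hr.ne']) (by simp; ring) (Continuous.continuousOn ?_)
    (HasDerivAt.continuousOn hF') (fun x hx => ?_) (fun x hx => ?_) (fun x hx y hy hxy => ?_) hb)
  · have hpow : Continuous fun x : ℝ => x ^ r := continuous_rpow_const hr.le
    fun_prop
  · have hx := Set.Ioo_subset_Ico_self hx
    refine (((hasDerivAt_const_mul (2 * r)).add
      ((hasDerivAt_pow 3 x).const_mul (2 ^ r - 2 * r))).sub
      ((hadd r x hx).sub (hsub r x hx))).congr_deriv ?_
    norm_num
  · refine (hF' x (Set.Ioo_subset_Ico_self hx)).congr_deriv ?_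
    have := hx.1.ne'
    field_simp
  · have : 0 ≤ r * (1 - r) := mul_nonneg hr.le (sub_nonneg.2 hr1)
    have hmono := monotoneOn_rpow_neg_sub_rpow_neg_div (p := 2 - r) (by linarith) hx hy hxy
    simp only at hmono ⊢
    gcongr

/-- The function `(1 + x) ^ q` with its graph over `x ≤ 1` replaced by the point reflection of the
graph over `1 ≤ x`, so that it is midpoint convex around every `x ≤ 1`. It strengthens the target
`(1 + x) ^ q` of the induction over the number of coefficients. -/
noncomputable def reflectedPow (q x : ℝ) : ℝ :=
  if 1 ≤ x then (1 + x) ^ q else 2 * 2 ^ q - (3 - x) ^ q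

lemma reflectedPow_of_one_le {q x : ℝ} (hx : 1 ≤ x) : reflectedPow q x = (1 + x) ^ q :=
  if_pos hx

lemma reflectedPow_of_le_one {q x : ℝ} (hx : x ≤ 1) :
    reflectedPow q x = 2 * 2 ^ q - (3 - x) ^ q := by
  rcases hx.eq_or_lt with rfl | hx
  · rw [reflectedPow_of_one_le le_rfl]
    norm_num
    ring
  · exact if_neg hx.not_ge

lemma one_add_rpow_le_reflectedPow {q x : ℝ} (hq : 0 ≤ q) (hq1 : q ≤ 1) (hx : 0 ≤ x) :
    (1 + x) ^ q ≤ reflectedPow q x := by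
  rcases le_total 1 x with h | h
  · rw [reflectedPow_of_one_le h]
  · rw [reflectedPow_of_le_one h]
    have := rpow_add_rpow_le_of_add_eq (a := 1 + x) (b := 2) (c := 2) (d := 3 - x) hq hq1
      (by linarith) (by linarith) (by linarith) (by ring)
    linarith

lemma two_mul_reflectedPow_le {q x h : ℝ} (hq : 0 ≤ q) (hq1 : q ≤ 1) (hx1 : x ≤ 1)
    (hh : 0 ≤ h) (hhx : h ≤ x) :
    2 * reflectedPow q x ≤ reflectedPow q (x + h) + reflectedPow q (x - h) := by
  rw [reflectedPow_of_le_one hx1, reflectedPow_of_le_one (x := x - h) (by linarith)]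
  rcases le_total (x + h) 1 with h1 | h1
  · rw [reflectedPow_of_le_one h1]
    have := rpow_add_rpow_le_of_add_eq (a := 3 - (x + h)) (b := 3 - x) (c := 3 - x)
      (d := 3 - (x - h)) hq hq1 (by linarith) (by linarith) (by linarith) (by ring)
    linarith
  · rw [reflectedPow_of_one_le h1]
    have houter := rpow_add_rpow_le_of_add_eq (a := 2) (b := 1 + (x + h)) (c := 4 - 2 * x)
      (d := 3 - (x - h)) hq hq1 (by linarith) (by linarith) (by linarith) (by ring)
    have hinner := rpow_add_rpow_le_of_add_eq (a := 2) (b := 3 - x) (c := 3 - x)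
      (d := 4 - 2 * x) hq hq1 (by linarith) (by linarith) (by linarith) (by ring)
    linarith

lemma two_mul_reflectedPow_sum_sq_le {q a b s : ℝ} (hq : 0 ≤ q) (hq1 : q ≤ 1) (hs : 0 ≤ s)
    (h : a ^ 2 + (b ^ 2 + s) ≤ 1) :
    2 * reflectedPow q (a ^ 2 + (b ^ 2 + s)) ≤
      reflectedPow q ((a + b) ^ 2 + s) + reflectedPow q ((a - b) ^ 2 + s) := by
  wlog hab : 0 ≤ a * b generalizing b
  · have hneg := this (b := -b) (by rwa [neg_sq]) (by linarith)
    rwa [neg_sq, ← sub_eq_add_neg, sub_neg_eq_add, add_comm (reflectedPow _ _)] at hneg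
  have hmid := two_mul_reflectedPow_le hq hq1 h (h := 2 * (a * b)) (by positivity)
    (by linarith [sq_nonneg (a - b)])
  convert hmid using 3 <;> ring

lemma one_sub_two_mul_le_four_rpow_neg {ε : ℝ} (hε : 0 ≤ ε) (hε1 : ε ≤ 1) :
    1 - 2 * ε ≤ 4 ^ (-ε) * (1 - ε / 2) := by
  have h4 : 1 - 1.4 * ε ≤ (4 : ℝ) ^ (-ε) := by
    rw [rpow_def_of_pos (by norm_num), show (4 : ℝ) = 2 ^ 2 by norm_num, log_pow]
    push_cast
    nlinarith [add_one_le_exp (2 * log 2 * -ε), log_two_lt_d9]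
  nlinarith

lemma one_sub_mul_le_one_add_rpow_neg {ε s : ℝ} (hε : 0 ≤ ε) (hε1 : ε ≤ 1) (hs : 0 ≤ s) :
    1 - ε * s ≤ (1 + s) ^ (-ε) := by
  have hbernoulli := rpow_one_add_le_one_add_mul_self (show -1 ≤ s by linarith) hε hε1
  rw [rpow_neg (by linarith)]
  refine le_trans ?_ (inv_anti₀ (by positivity) hbernoulli)
  rw [← one_div, le_div_iff₀ (by positivity)]
  nlinarith [sq_nonneg (ε * s)]

lemma chord_le_rpow_neg {ε x : ℝ} (hε : 0 ≤ ε) (hε1 : ε ≤ 1) (hx1 : x ≤ 1) :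
    (1 - x) * (1 - 2 * ε) + x * 4 ^ (-ε) ≤ (6 - 2 * x) ^ (-ε) := by
  have hs : 0 ≤ (1 - x) / 2 := by linarith
  calc (1 - x) * (1 - 2 * ε) + x * 4 ^ (-ε)
      ≤ (1 - x) * (4 ^ (-ε) * (1 - ε / 2)) + x * 4 ^ (-ε) := by
        gcongr
        exact one_sub_two_mul_le_four_rpow_neg hε hε1
    _ = 4 ^ (-ε) * (1 - ε * ((1 - x) / 2)) := by ring
    _ ≤ 4 ^ (-ε) * (1 + (1 - x) / 2) ^ (-ε) := by
        gcongr
        exact one_sub_mul_le_one_add_rpow_neg hε hε1 hs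
    _ = (6 - 2 * x) ^ (-ε) := by
        rw [← mul_rpow (by norm_num) (by linarith), mul_add]
        ring_nf

lemma one_add_rpow_sub_one_sub_rpow_le_mul_rpow {q x : ℝ} (hq : 1 / 2 < q) (hq1 : q ≤ 1)
    (hx : x ∈ Set.Icc 0 1) :
    (1 + x) ^ (2 * q - 1) - (1 - x) ^ (2 * q - 1) ≤ x * (2 ^ q * (3 - x ^ 2) ^ (q - 1)) := by
  have hx1 : x ^ 2 ≤ 1 := pow_le_one₀ hx.1 hx.2
  have h4 : (2 : ℝ) ^ (2 * q - 1) = 2 * 4 ^ (-(1 - q)) := by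
    rw [show (4 : ℝ) = 2 ^ (2 : ℝ) by norm_num, ← rpow_mul zero_le_two, ← rpow_one_add' zero_le_two]
    · ring_nf
    · linarith
  have h6 : 2 ^ q * (3 - x ^ 2) ^ (q - 1) = 2 * (6 - 2 * x ^ 2) ^ (-(1 - q)) := by
    rw [show 6 - 2 * x ^ 2 = 2 * (3 - x ^ 2) by ring, mul_rpow zero_le_two (by linarith), neg_sub,
      rpow_sub_one two_ne_zero]
    ring
  have hchord := chord_le_rpow_neg (ε := 1 - q) (by linarith) (by linarith) hx1
  calc (1 + x) ^ (2 * q - 1) - (1 - x) ^ (2 * q - 1)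
      ≤ 2 * (2 * q - 1) * x + (2 ^ (2 * q - 1) - 2 * (2 * q - 1)) * x ^ 3 :=
        one_add_rpow_sub_one_sub_rpow_le (by linarith) (by linarith) hx
    _ = 2 * x * ((1 - x ^ 2) * (1 - 2 * (1 - q)) + x ^ 2 * 4 ^ (-(1 - q))) := by rw [h4]; ring
    _ ≤ 2 * x * (6 - 2 * x ^ 2) ^ (-(1 - q)) :=
        mul_le_mul_of_nonneg_left hchord (by linarith [hx.1])
    _ = x * (2 ^ q * (3 - x ^ 2) ^ (q - 1)) := by rw [h6]; ring

lemma antitoneOn_two_point {q : ℝ} (hq : 1 / 2 < q) (hq1 : q ≤ 1) :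
    AntitoneOn (fun x : ℝ => (1 + x) ^ (2 * q) + (1 - x) ^ (2 * q) + 2 ^ q * (3 - x ^ 2) ^ q)
      (Set.Icc 0 1) := by
  refine antitoneOn_of_hasDerivWithinAt_nonpos (convex_Icc 0 1) (f' := fun x =>
    2 * q * ((1 + x) ^ (2 * q - 1) - (1 - x) ^ (2 * q - 1) -
      x * (2 ^ q * (3 - x ^ 2) ^ (q - 1)))) (Continuous.continuousOn ?_) (fun x hx => ?_)
    (fun x hx => ?_)
  · have h2q : Continuous fun x : ℝ => x ^ (2 * q) := continuous_rpow_const (by linarith)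
    have hq : Continuous fun x : ℝ => x ^ q := continuous_rpow_const (by linarith)
    fun_prop
  · rw [interior_Icc] at hx
    have h3 : (3 : ℝ) - x ^ 2 ≠ 0 := by nlinarith [hx.1, hx.2]
    refine HasDerivAt.hasDerivWithinAt ?_
    refine (((hasDerivAt_const_add_rpow (2 * q) (by linarith [hx.1])).add
      (hasDerivAt_const_sub_rpow (2 * q) hx.2)).add
      ((((hasDerivAt_pow 2 x).const_sub 3).rpow_const (Or.inl h3)).const_mul
        (2 ^ q))).congr_deriv ?_
    push_cast
    ring
  · have := one_add_rpow_sub_one_sub_rpow_le_mul_rpow hq hq1 (interior_subset hx)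
    exact mul_nonpos_of_nonneg_of_nonpos (by linarith) (by linarith)

lemma two_rpow_mul_reflectedPow_sq_le {q b : ℝ} (hq : 1 / 2 < q) (hq1 : q ≤ 1)
    (hb : b ∈ Set.Icc 0 1) :
    2 ^ q * reflectedPow q (b ^ 2) ≤ (1 + b) ^ (2 * q) + (1 - b) ^ (2 * q) := by
  have hanti := antitoneOn_two_point hq hq1 hb (Set.right_mem_Icc.2 zero_le_one) hb.2
  have h4 : (2 : ℝ) ^ (2 * q) = 2 ^ q * 2 ^ q := by rw [two_mul, rpow_add two_pos]
  norm_num [zero_rpow (show 2 * q ≠ 0 by linarith), h4] at hanti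
  rw [reflectedPow_of_le_one (pow_le_one₀ hb.1 hb.2)]
  linarith

/-! ### Induction on the number of coefficients -/

lemma abs_rpow_two_mul (x q : ℝ) : |x| ^ (2 * q) = (x ^ 2) ^ q := by
  rw [rpow_mul (abs_nonneg x), rpow_two, sq_abs]

lemma sum_map_sq_nonneg (l : List ℝ) : 0 ≤ (l.map fun a => a ^ 2).sum :=
  List.sum_nonneg (by simp only [List.mem_map]; rintro _ ⟨a, -, rfl⟩; positivity)

lemma sum_map_sq_cons_eq_mul {c : ℝ} (hc : c ≠ 0) (l : List ℝ) :
    ((c :: l).map fun a => a ^ 2).sum =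
      c ^ 2 * (1 + ((l.map (c⁻¹ * ·)).map fun a => a ^ 2).sum) := by
  rw [List.map_map, show (fun a : ℝ => a ^ 2) ∘ (c⁻¹ * ·) = fun a => c⁻¹ ^ 2 * a ^ 2 by
    ext; simp [mul_pow], List.sum_map_mul_left, List.map_cons, List.sum_cons]
  field_simp

lemma signAverage_abs_rpow_eq_mul {c : ℝ} (hc : c ≠ 0) (r : ℝ) (l : List ℝ) :
    signAverage (fun x => |x| ^ r) l c =
      |c| ^ r * signAverage (fun x => |x| ^ r) (l.map (c⁻¹ * ·)) 1 := by
  have hl : (l.map (c⁻¹ * ·)).map (AddMonoidHom.mulLeft c) = l := by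
    simp [List.map_map, Function.comp_def, hc]
  have hscale := signAverage_comp (AddMonoidHom.mulLeft c) (fun x => |x| ^ r) (l.map (c⁻¹ * ·)) 1
  rw [hl, AddMonoidHom.coe_mulLeft, mul_one] at hscale
  rw [← signAverage_const_mul, ← hscale]
  simp only [← mul_rpow (abs_nonneg _) (abs_nonneg _), ← abs_mul]

/-- The Khintchine inequality with constant `γ` for the sum with coefficients `1, l`, strengthened
from `(1 + x) ^ q` to `reflectedPow q x`; here `x` is the sum of the squares of `l`. -/
def ReflectedKhintchine (γ q : ℝ) (l : List ℝ) : Prop :=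
  γ * reflectedPow q (l.map fun a => a ^ 2).sum ≤ signAverage (fun x => |x| ^ (2 * q)) l 1

lemma ReflectedKhintchine.mul_sum_sq_rpow_le {γ q c : ℝ} {l : List ℝ} (hγ : 0 ≤ γ) (hq : 0 ≤ q)
    (hq1 : q ≤ 1) (hc : c ≠ 0) (h : ReflectedKhintchine γ q (l.map (c⁻¹ * ·))) :
    γ * (((c :: l).map fun a => a ^ 2).sum) ^ q ≤ signAverage (fun x => |x| ^ (2 * q)) l c := by
  have hs := sum_map_sq_nonneg (l.map (c⁻¹ * ·))
  rw [sum_map_sq_cons_eq_mul hc, signAverage_abs_rpow_eq_mul hc, mul_rpow (sq_nonneg c)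
    (by linarith), ← abs_rpow_two_mul, mul_left_comm]
  refine mul_le_mul_of_nonneg_left (le_trans ?_ h) (by positivity)
  exact mul_le_mul_of_nonneg_left (one_add_rpow_le_reflectedPow hq hq1 hs) hγ

lemma reflectedKhintchine_singleton {γ q b : ℝ} (hq : 1 / 2 < q) (hq1 : q ≤ 1)
    (hγ : 2 * γ ≤ 2 ^ q) (hb : b ^ 2 ≤ 1) : ReflectedKhintchine γ q [b] := by
  have hb1 : |b| ≤ 1 := (sq_le_one_iff_abs_le_one b).1 hb
  have havg : signAverage (fun x => |x| ^ (2 * q)) [b] 1 =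
      ((1 + |b|) ^ (2 * q) + (1 - |b|) ^ (2 * q)) / 2 := by
    simp only [signAverage]
    rcases abs_cases b with ⟨h, _⟩ | ⟨h, _⟩ <;> rw [h] at hb1 ⊢
    · rw [abs_of_nonneg (by linarith), abs_of_nonneg (by linarith)]
    · rw [abs_of_nonneg (a := 1 + b) (by linarith), abs_of_nonneg (by linarith), sub_neg_eq_add,
        ← sub_eq_add_neg, add_comm ((1 + b) ^ _)]
  have htwo := two_rpow_mul_reflectedPow_sq_le hq hq1 ⟨abs_nonneg b, hb1⟩
  rw [sq_abs] at htwo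
  have hpos : 0 ≤ reflectedPow q (b ^ 2) :=
    le_trans (by positivity) (one_add_rpow_le_reflectedPow (by linarith) hq1 (sq_nonneg b))
  simp only [ReflectedKhintchine, havg, List.map_singleton, List.sum_singleton]
  linarith [mul_le_mul_of_nonneg_right hγ hpos]

lemma reflectedKhintchine_cons_cons {γ q a b : ℝ} {l : List ℝ} (hγ : 0 ≤ γ) (hq : 0 ≤ q)
    (hq1 : q ≤ 1) (hl : ((a :: b :: l).map fun a => a ^ 2).sum ≤ 1)
    (hadd : ReflectedKhintchine γ q ((a + b) :: l))
    (hsub : ReflectedKhintchine γ q ((a - b) :: l)) : ReflectedKhintchine γ q (a :: b :: l) := by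
  have hs := sum_map_sq_nonneg l
  simp only [ReflectedKhintchine, signAverage, List.map_cons, List.sum_cons] at hadd hsub hl ⊢
  have hconv := mul_le_mul_of_nonneg_left (two_mul_reflectedPow_sum_sq_le hq hq1 hs hl) hγ
  rw [add_sub_assoc, sub_add, sub_sub, add_assoc]
  linarith

lemma reflectedKhintchine_nil {γ q : ℝ} (hq : 1 / 2 < q) (hq1 : q ≤ 1) (hγ : 2 * γ ≤ 2 ^ q) :
    ReflectedKhintchine γ q [] := by
  simpa [ReflectedKhintchine, signAverage] using
    reflectedKhintchine_singleton (b := 0) hq hq1 hγ (by norm_num)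

/- If a coefficient `b` is too large for the integral bound, exchanging it with the leading `1` and
dividing by it leads to coefficients with sum of squares at most `1`. -/
lemma reflectedKhintchine_of_one_lt {q : ℝ} (hq : 7 / 8 ≤ q) (hq1 : q < 1)
    (hG : Real.Gamma (q + 1 / 2) ≤ √π / 2) {l : List ℝ} (hl : 1 < (l.map fun a => a ^ 2).sum)
    (hsmall : ∀ l' : List ℝ, l'.length = l.length → (l'.map fun a => a ^ 2).sum ≤ 1 →
      ReflectedKhintchine (gaussMoment q) q l') : ReflectedKhintchine (gaussMoment q) q l := by
  have hsum : ((1 :: l).map fun a => a ^ 2).sum = 1 + (l.map fun a => a ^ 2).sum := by simp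
  rw [ReflectedKhintchine, reflectedPow_of_one_le hl.le, ← hsum]
  by_cases hall : ∀ b ∈ 1 :: l, 2 * b ^ 2 ≤ ((1 :: l).map fun a => a ^ 2).sum
  · exact gaussMoment_mul_sum_sq_rpow_le_signAverage_of_le hq hq1 hG hall
  obtain ⟨b, hb, hbl⟩ : ∃ b ∈ l, 1 + (l.map fun a => a ^ 2).sum < 2 * b ^ 2 := by
    push Not at hall
    obtain ⟨b, hb, hbl⟩ := hall
    rw [hsum] at hbl
    refine ⟨b, (List.mem_cons.1 hb).resolve_left ?_, hbl⟩
    rintro rfl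
    linarith
  have hb0 : b ≠ 0 := by rintro rfl; linarith
  obtain ⟨l', hperm⟩ : ∃ l', l.Perm (b :: l') := ⟨_, List.perm_cons_erase hb⟩
  have hperm' : (1 :: l).Perm (b :: 1 :: l') := (hperm.cons 1).trans (.swap b 1 l')
  rw [(hperm'.map _).sum_eq, signAverage_eq_of_perm hperm,
    signAverage_cons_comm (fun x => by rw [abs_neg])]
  refine (hsmall _ ?_ ?_).mul_sum_sq_rpow_le (gaussMoment_pos (by linarith)).le (by linarith)
    hq1.le hb0
  · rw [List.length_map, hperm.length_eq, List.length_cons, List.length_cons]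
  · rw [← hsum, (hperm'.map _).sum_eq, sum_map_sq_cons_eq_mul hb0] at hbl
    nlinarith [sq_nonneg b]

lemma reflectedKhintchine_gaussMoment {q : ℝ} (hq : 7 / 8 ≤ q) (hq1 : q < 1)
    (hG : Real.Gamma (q + 1 / 2) ≤ √π / 2) (l : List ℝ) :
    ReflectedKhintchine (gaussMoment q) q l := by
  have hγ0 : 0 ≤ gaussMoment q := (gaussMoment_pos (by linarith)).le
  have hγ : 2 * gaussMoment q ≤ 2 ^ q := two_mul_gaussMoment_le hG
  induction hn : l.length using Nat.strong_induction_on generalizing l with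
  | _ n ih =>
    have hsmall (l : List ℝ) (hn : l.length = n) (hl : (l.map fun a => a ^ 2).sum ≤ 1) :
        ReflectedKhintchine (gaussMoment q) q l := by
      match l with
      | [] => exact reflectedKhintchine_nil (by linarith) hq1.le hγ
      | [b] => exact reflectedKhintchine_singleton (by linarith) hq1.le hγ (by simpa using hl)
      | a :: b :: l =>
        exact reflectedKhintchine_cons_cons hγ0 (by linarith) hq1.le hl
          (ih _ (by simp [← hn]) _ rfl) (ih _ (by simp [← hn]) _ rfl)
    rcases le_or_gt (l.map fun a => a ^ 2).sum 1 with hl | hl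
    · exact hsmall l hn hl
    · exact reflectedKhintchine_of_one_lt hq hq1 hG hl fun l' hl' => hsmall l' (hl'.trans hn)

theorem gaussMoment_mul_sum_sq_rpow_le_signAverage {q : ℝ} (hq : 7 / 8 ≤ q) (hq1 : q < 1)
    (hG : Real.Gamma (q + 1 / 2) ≤ √π / 2) (l : List ℝ) (c : ℝ) :
    gaussMoment q * (((c :: l).map fun a => a ^ 2).sum) ^ q ≤
      signAverage (fun x => |x| ^ (2 * q)) l c := by
  have hq0 : q ≠ 0 := by linarith
  by_cases hc : c = 0
  · subst hc
    induction l with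
    | nil => simpa [signAverage, zero_rpow hq0] using zero_rpow_nonneg (2 * q)
    | cons a l ih =>
      by_cases ha : a = 0
      · simpa [ha, signAverage] using ih
      · rw [signAverage_cons_comm (fun x => by rw [abs_neg]), ((List.Perm.swap a 0 l).map _).sum_eq]
        exact (reflectedKhintchine_gaussMoment hq hq1 hG _).mul_sum_sq_rpow_le
          (gaussMoment_pos (by linarith)).le (by linarith) hq1.le ha
  · exact (reflectedKhintchine_gaussMoment hq hq1 hG _).mul_sum_sq_rpow_le
      (gaussMoment_pos (by linarith)).le (by linarith) hq1.le hc

/-! ### The critical exponent -/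

lemma Gamma_add_nat_eq_mul_prod {s : ℝ} (hs : 0 < s) (n : ℕ) :
    Real.Gamma (s + n) = Real.Gamma s * ∏ m ∈ Finset.range n, (s + m) := by
  induction n with
  | zero => simp
  | succ n ih =>
    rw [Nat.cast_succ, ← add_assoc, Real.Gamma_add_one (by positivity), ih,
      Finset.prod_range_succ]
    ring

lemma Gamma_three_halves : Real.Gamma (3 / 2) = √π / 2 := by
  rw [show (3 : ℝ) / 2 = 1 / 2 + 1 by norm_num, Real.Gamma_add_one (by norm_num),
    Real.Gamma_one_half_eq]
  ring

lemma Gamma_add_half_pow_five_le {x : ℝ} (hx : 0 < x) :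
    Real.Gamma (x + 1 / 2) ^ 5 ≤ Real.Gamma (x + 3 / 8) ^ 4 * Real.Gamma (x + 1) := by
  have h1 := (Real.Gamma_pos_of_pos (show 0 < x + 3 / 8 by positivity)).le
  have h2 := (Real.Gamma_pos_of_pos (show 0 < x + 1 by positivity)).le
  have := (Real.Gamma_pos_of_pos (show 0 < x + 1 / 2 by positivity)).le
  have hlog := Real.Gamma_mul_add_mul_le_rpow_Gamma_mul_rpow_Gamma
    (show 0 < x + 3 / 8 by positivity) (show 0 < x + 1 by positivity)
    (show (0 : ℝ) < 4 / 5 by norm_num) (show (0 : ℝ) < 1 / 5 by norm_num) (by norm_num)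
  rw [show 4 / 5 * (x + 3 / 8) + 1 / 5 * (x + 1) = x + 1 / 2 by ring] at hlog
  calc Real.Gamma (x + 1 / 2) ^ 5
      ≤ (Real.Gamma (x + 3 / 8) ^ (4 / 5 : ℝ) * Real.Gamma (x + 1) ^ (1 / 5 : ℝ)) ^ 5 := by gcongr
    _ = Real.Gamma (x + 3 / 8) ^ 4 * Real.Gamma (x + 1) := by
      rw [mul_pow, ← rpow_natCast, ← rpow_natCast (_ ^ (1 / 5 : ℝ)), ← rpow_mul h1, ← rpow_mul h2]
      norm_num

/- The functional equation moves the comparison with the value at `3 / 2` to arguments near `16`,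
where log-convexity of the Gamma function loses little. -/
lemma sqrt_pi_div_two_lt_Gamma_eleven_eighths : √π / 2 < Real.Gamma (11 / 8) := by
  have hpi : 0.886 < √π / 2 := by
    have : 1.772 < √π := lt_sqrt_of_sq_lt (by linarith [pi_gt_d4])
    linarith
  have hconv := Gamma_add_half_pow_five_le (x := 16) (by norm_num)
  rw [show (16 : ℝ) + 1 / 2 = 3 / 2 + (15 : ℕ) by norm_num,
    show (16 : ℝ) + 3 / 8 = 11 / 8 + (15 : ℕ) by norm_num,
    show (16 : ℝ) + 1 = 2 + (15 : ℕ) by norm_num,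
    Gamma_add_nat_eq_mul_prod (by norm_num), Gamma_add_nat_eq_mul_prod (by norm_num),
    Gamma_add_nat_eq_mul_prod (by norm_num), Gamma_three_halves, Real.Gamma_two] at hconv
  norm_num [Finset.prod_range_succ] at hconv
  by_contra! hle
  have hpow : Real.Gamma (11 / 8) ^ 4 ≤ (√π / 2) ^ 4 := by
    have := (Real.Gamma_pos_of_pos (show (0 : ℝ) < 11 / 8 by norm_num)).le
    gcongr
  nlinarith [pow_pos (show 0 < √π / 2 by linarith) 4]

lemma eulerMascheroniConstant_add_two_mul_log_two_lt :
    eulerMascheroniConstant + 2 * log 2 < 2 := by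
  have hseq := eulerMascheroniConstant_lt_eulerMascheroniSeq' 16
  have hH : harmonic 16 = 2436559 / 720720 := by
    norm_num [harmonic, Finset.sum_range_succ]
  have h16 : log 16 = 4 * log 2 := by
    rw [show (16 : ℝ) = 2 ^ 4 by norm_num, log_pow]
    norm_num
  rw [eulerMascheroniSeq', if_neg (by norm_num), hH] at hseq
  norm_num [h16] at hseq
  linarith [log_two_gt_d9]

lemma hasDerivAt_Gamma_three_halves :
    HasDerivAt Real.Gamma (√π * (1 - (eulerMascheroniConstant + 2 * log 2) / 2)) (3 / 2) := by
  have hmul : HasDerivAt (fun s => s * Real.Gamma s)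
      (√π * (1 - (eulerMascheroniConstant + 2 * log 2) / 2)) (1 / 2) := by
    refine ((hasDerivAt_id (1 / 2 : ℝ)).mul hasDerivAt_Gamma_one_half).congr_deriv ?_
    rw [Real.Gamma_one_half_eq, id]
    ring
  have hshift : HasDerivAt (fun s => Real.Gamma (s + 1))
      (√π * (1 - (eulerMascheroniConstant + 2 * log 2) / 2)) (3 / 2 - 1) := by
    rw [show (3 : ℝ) / 2 - 1 = 1 / 2 by norm_num]
    refine hmul.congr_of_eventuallyEq ?_
    filter_upwards [lt_mem_nhds (show (0 : ℝ) < 1 / 2 by norm_num)] with s hs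
    exact Real.Gamma_add_one hs.ne'
  simpa using HasDerivAt.comp_sub_const (3 / 2) 1 hshift

lemma exists_Gamma_lt_sqrt_pi_div_two {x : ℝ} (hx : x < 3 / 2) :
    ∃ y ∈ Set.Ioo x (3 / 2), Real.Gamma y < √π / 2 := by
  have hpos : 0 < √π * (1 - (eulerMascheroniConstant + 2 * log 2) / 2) :=
    mul_pos (by positivity) (by linarith [eulerMascheroniConstant_add_two_mul_log_two_lt])
  have hslope := (hasDerivAt_iff_tendsto_slope_left_right.1 hasDerivAt_Gamma_three_halves).1
  obtain ⟨y, hy, hxy⟩ := ((hslope.eventually_const_lt hpos).and (Ioo_mem_nhdsLT hx)).exists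
  refine ⟨y, hxy, ?_⟩
  rw [slope_def_field, Gamma_three_halves] at hy
  have hneg := (div_pos_iff.1 hy).resolve_left fun h => by linarith [h.2, hxy.2]
  exact sub_neg.1 hneg.1

lemma Gamma_ne_sqrt_pi_div_two {u w : ℝ} (hu : 0 < u) (huw : u < w) (hw : w < 3 / 2)
    (h : Real.Gamma u = √π / 2) : Real.Gamma w ≠ √π / 2 := by
  intro h'
  obtain ⟨t, ht, hlt⟩ := exists_Gamma_lt_sqrt_pi_div_two hw
  have hconv := Real.convexOn_Gamma.slope_mono_adjacent (show 0 < u from hu)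
    (show 0 < t from (hu.trans huw).trans ht.1) huw ht.1
  rw [h, h', sub_self, zero_div] at hconv
  exact hconv.not_gt (div_neg_of_neg_of_pos (sub_neg.2 hlt) (sub_pos.2 ht.1))

lemma exists_Gamma_eq_sqrt_pi_div_two :
    ∃ z ∈ Set.Ico (11 / 8 : ℝ) (3 / 2), Real.Gamma z = √π / 2 := by
  obtain ⟨y, hy, hlt⟩ := exists_Gamma_lt_sqrt_pi_div_two (x := 11 / 8) (by norm_num)
  have hcont : ContinuousOn Real.Gamma (Set.Icc (11 / 8) y) := fun z hz =>
    (Real.differentiableAt_Gamma fun m => by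
      linarith [hz.1, m.cast_nonneg (α := ℝ)]).continuousAt.continuousWithinAt
  obtain ⟨z, hz, hzv⟩ := intermediate_value_Icc' hy.1.le hcont
    ⟨hlt.le, sqrt_pi_div_two_lt_Gamma_eleven_eighths.le⟩
  exact ⟨z, ⟨hz.1, hz.2.trans_lt hy.2⟩, hzv⟩

lemma khintchineP0_eq {z : ℝ} (hz : z ∈ Set.Ioo 1 (3 / 2)) (hΓ : Real.Gamma z = √π / 2) :
    khintchineP0 = 2 * z - 1 := by
  suffices hset : {p : ℝ | 1 < p ∧ p < 2 ∧ Real.Gamma ((p + 1) / 2) = √π / 2} = {2 * z - 1} by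
    rw [khintchineP0, hset, csInf_singleton]
  ext p
  simp only [Set.mem_ofPred_eq, Set.mem_singleton_iff]
  constructor
  · rintro ⟨hp1, hp2, hp⟩
    rcases lt_trichotomy ((p + 1) / 2) z with h | h | h
    · exact absurd hΓ (Gamma_ne_sqrt_pi_div_two (by linarith) h hz.2 hp)
    · linarith
    · exact absurd hp (Gamma_ne_sqrt_pi_div_two (by linarith [hz.1]) h (by linarith) hΓ)
  · rintro rfl
    refine ⟨by linarith [hz.1], by linarith [hz.2], ?_⟩
    rw [show (2 * z - 1 + 1) / 2 = z by ring, hΓ]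

lemma khintchineP0_spec : khintchineP0 ∈ Set.Ico (7 / 4) 2 ∧
    Real.Gamma ((khintchineP0 + 1) / 2) = √π / 2 := by
  obtain ⟨z, hz, hΓ⟩ := exists_Gamma_eq_sqrt_pi_div_two
  rw [khintchineP0_eq ⟨by linarith [hz.1], hz.2⟩ hΓ, show (2 * z - 1 + 1) / 2 = z by ring]
  exact ⟨⟨by linarith [hz.1], by linarith [hz.2]⟩, hΓ⟩

lemma Gamma_le_of_khintchineP0_le {r : ℝ} (h : khintchineP0 ≤ r) (hr : r ≤ 2) :
    Real.Gamma ((r + 1) / 2) ≤ √π / 2 := by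
  obtain ⟨⟨h0, -⟩, hΓ⟩ := khintchineP0_spec
  have hmax := Real.convexOn_Gamma.le_max_of_mem_Icc (x := (khintchineP0 + 1) / 2) (y := 3 / 2)
    (z := (r + 1) / 2) (by simp; linarith) (by simp) ⟨by linarith, by linarith⟩
  rwa [hΓ, Gamma_three_halves, max_self] at hmax

/-! ### The sharp Khintchine inequality for all exponents -/

/- Interpolation between the exponents `q` and `1` at `q₀`, normalized by `signAverage f l c`. -/
lemma le_signAverage_rpow_of_le {V : Type*} [AddCommGroup V] {f : V → ℝ} {l : List V} {c : V}
    {q q₀ : ℝ} (hq : 0 < q) (hqq : q ≤ q₀) (hq1 : q₀ < 1) (hf : ∀ x, 0 ≤ f x)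
    (h : signAverage f l c ≤ signAverage (fun x => f x ^ q₀) l c) :
    signAverage f l c ≤ signAverage (fun x => f x ^ q) l c := by
  obtain ⟨w, hw⟩ : ∃ w, w = (1 - q₀) / (1 - q) := ⟨_, rfl⟩
  have hq1' : 0 < 1 - q := by linarith
  have hw0 : 0 < w := hw ▸ div_pos (by linarith) hq1'
  have hw1 : 0 ≤ 1 - w := by rw [hw, sub_nonneg, div_le_one hq1']; linarith
  have hwq : q * w + (1 - w) = q₀ := by rw [hw]; field_simp; ring
  have hpt (x : V) : f x ^ q₀ ≤ w * f x ^ q + (1 - w) * f x := by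
    have hamgm := Real.geom_mean_le_arith_mean2_weighted hw0.le hw1
      (rpow_nonneg (hf x) q) (hf x) (by ring)
    rwa [← rpow_mul (hf x), ← rpow_add_of_nonneg (hf x) (by positivity) hw1, hwq] at hamgm
  have havg := h.trans (signAverage_mono hpt l c)
  rw [signAverage_add, signAverage_const_mul, signAverage_const_mul] at havg
  exact le_of_mul_le_mul_left (by linarith) hw0

lemma signAverage_rpow_le {V : Type*} [AddCommGroup V] {f : V → ℝ} {s : ℝ} (hs : 1 ≤ s)
    (hf : ∀ x, 0 ≤ f x) :
    ∀ (l : List V) (c : V), signAverage f l c ^ s ≤ signAverage (fun x => f x ^ s) l c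
  | [], _ => le_rfl
  | a :: l, c => by
    have hconv := (convexOn_rpow hs).2 (signAverage_nonneg hf l (c + a))
      (signAverage_nonneg hf l (c - a)) one_half_pos.le one_half_pos.le (add_halves 1)
    simp only [smul_eq_mul, one_div, ← mul_add] at hconv
    simp only [signAverage, div_eq_inv_mul]
    refine hconv.trans ?_
    gcongr
    · exact signAverage_rpow_le hs hf l (c + a)
    · exact signAverage_rpow_le hs hf l (c - a)

lemma two_rpow_mul_sum_sq_rpow_le_signAverage_of_le {q q₀ : ℝ} (hq : 0 < q) (hqq : q ≤ q₀)
    (hq1 : q₀ < 1) {l : List ℝ} {c : ℝ}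
    (h : 2 ^ (q₀ - 1) * (((c :: l).map fun a => a ^ 2).sum) ^ q₀ ≤
      signAverage (fun x => |x| ^ (2 * q₀)) l c) :
    2 ^ (q - 1) * (((c :: l).map fun a => a ^ 2).sum) ^ q ≤
      signAverage (fun x => |x| ^ (2 * q)) l c := by
  have hσ := sum_map_sq_nonneg (c :: l)
  have hsq := signAverage_sq l c
  generalize ((c :: l).map fun a => a ^ 2).sum = σ at *
  rcases hσ.eq_or_lt with rfl | hσ
  · rw [zero_rpow hq.ne', mul_zero]
    exact signAverage_nonneg (fun x => by positivity) _ _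
  have hmean : signAverage (fun x => (2 * σ)⁻¹ * x ^ 2) l c = 1 / 2 := by
    rw [signAverage_const_mul, hsq]
    field_simp
  have hpow (s : ℝ) : signAverage (fun x => ((2 * σ)⁻¹ * x ^ 2) ^ s) l c =
      ((2 * σ) ^ s)⁻¹ * signAverage (fun x => |x| ^ (2 * s)) l c := by
    rw [← signAverage_const_mul]
    congr with x
    rw [mul_rpow (by positivity) (sq_nonneg x), inv_rpow (by positivity), abs_rpow_two_mul]
  have hscale (s : ℝ) : 2 ^ (s - 1) * σ ^ s = (2 * σ) ^ s * (1 / 2) := by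
    rw [mul_rpow zero_le_two hσ.le, rpow_sub_one two_ne_zero]
    ring
  have hinterp := le_signAverage_rpow_of_le (f := fun x => (2 * σ)⁻¹ * x ^ 2) (l := l) (c := c)
    hq hqq hq1 (fun x => by positivity)
  rw [hmean, hpow, hpow, le_inv_mul_iff₀ (by positivity), le_inv_mul_iff₀ (by positivity),
    ← hscale, ← hscale] at hinterp
  exact hinterp h

lemma khintchineA_rpow_of_le_khintchineP0 {r : ℝ} (hr : 0 < r) (h : r ≤ khintchineP0) :
    khintchineA r ^ r = (2 ^ (r / 2 - 1))⁻¹ := by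
  rw [khintchineA, if_pos h, ← rpow_mul zero_le_two, ← rpow_neg zero_le_two]
  congr 1
  field_simp
  ring

lemma khintchineA_rpow_of_lt_two {r : ℝ} (hr : 0 < r) (h : khintchineP0 < r) (hr2 : r < 2) :
    khintchineA r ^ r = (gaussMoment (r / 2))⁻¹ := by
  have : 0 < Real.Gamma ((r + 1) / 2) := Real.Gamma_pos_of_pos (by linarith)
  rw [khintchineA, if_neg h.not_ge, if_pos hr2, gaussMoment, ← add_div,
    mul_rpow (by positivity) (by positivity), ← rpow_mul (by positivity),
    show -(1 / r) * r = -1 by field_simp, rpow_neg_one, div_rpow zero_le_one (by positivity),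
    one_rpow, sqrt_eq_rpow 2, ← rpow_mul zero_le_two, show 1 / 2 * r = r / 2 by ring]
  field_simp

lemma khintchineA_of_two_le {r : ℝ} (h : 2 ≤ r) : khintchineA r = 1 := by
  rw [khintchineA, if_neg (khintchineP0_spec.1.2.trans_le h).not_ge, if_neg h.not_gt]

theorem sum_sq_rpow_le_khintchineA_rpow_mul_signAverage {r : ℝ} (hr : 0 < r) (l : List ℝ)
    (c : ℝ) : (((c :: l).map fun a => a ^ 2).sum) ^ (r / 2) ≤
      khintchineA r ^ r * signAverage (fun x => |x| ^ r) l c := by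
  obtain ⟨⟨hp0, hp2⟩, hΓ⟩ := khintchineP0_spec
  obtain ⟨q, rfl⟩ : ∃ q, r = 2 * q := ⟨r / 2, by ring⟩
  rw [mul_div_cancel_left₀ q two_ne_zero]
  rcases le_or_gt (2 * q) khintchineP0 with h | h
  · have hcrit := gaussMoment_mul_sum_sq_rpow_le_signAverage (q := khintchineP0 / 2) (by linarith)
      (by linarith) (by rw [← add_div, hΓ]) l c
    have hconst : gaussMoment (khintchineP0 / 2) = 2 ^ (khintchineP0 / 2 - 1) := by
      rw [gaussMoment, ← add_div, hΓ, rpow_sub_one two_ne_zero]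
      field_simp
    rw [hconst] at hcrit
    rw [khintchineA_rpow_of_le_khintchineP0 hr h, le_inv_mul_iff₀ (by positivity),
      mul_div_cancel_left₀ q two_ne_zero]
    exact two_rpow_mul_sum_sq_rpow_le_signAverage_of_le (by linarith) (by linarith) (by linarith)
      hcrit
  rcases lt_or_ge (2 * q) 2 with h2 | h2
  · rw [khintchineA_rpow_of_lt_two hr h h2, mul_div_cancel_left₀ q two_ne_zero,
      le_inv_mul_iff₀ (gaussMoment_pos (by linarith))]
    refine gaussMoment_mul_sum_sq_rpow_le_signAverage (by linarith) (by linarith) ?_ l c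
    convert Gamma_le_of_khintchineP0_le h.le h2.le using 2
    ring
  · rw [khintchineA_of_two_le h2, one_rpow, one_mul, ← signAverage_sq]
    simp only [abs_rpow_two_mul]
    exact signAverage_rpow_le (by linarith) sq_nonneg l c

/-! ### Averaging over the vertices of the cube -/

lemma signAverage_le_of_forall_abs_le_one {ι : Type*} [DecidableEq ι] {f : (ι → ℝ) → ℝ} {K : ℝ}
    (hf : ∀ y, (∀ j, |y j| ≤ 1) → f y ≤ K) :
    ∀ (s : List ι) (c : ι → ℝ), s.Nodup → (∀ j ∈ s, c j = 0) → (∀ j, |c j| ≤ 1) →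
      signAverage f (s.map fun j => Pi.single j 1) c ≤ K
  | [], c, _, _, hc => hf c hc
  | a :: s, c, hs, h0, hc => by
    obtain ⟨ha, hs⟩ := List.nodup_cons.1 hs
    obtain ⟨hca, h0⟩ := List.forall_mem_cons.1 h0
    have hflip (ε : ℝ) (hε : |ε| = 1) :
        signAverage f (s.map fun j => Pi.single j 1) (c + Pi.single a ε) ≤ K := by
      refine signAverage_le_of_forall_abs_le_one hf s _ hs (fun j hj => ?_) fun j => ?_
      · rw [Pi.add_apply, h0 j hj, Pi.single_eq_of_ne (ne_of_mem_of_not_mem hj ha), add_zero]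
      · rcases eq_or_ne j a with rfl | hj
        · rw [Pi.add_apply, hca, Pi.single_eq_same, zero_add, hε]
        · rw [Pi.add_apply, Pi.single_eq_of_ne hj, add_zero]
          exact hc j
    have hplus := hflip 1 abs_one
    have hminus := hflip (-1) (by rw [abs_neg, abs_one])
    rw [Pi.single_neg, ← sub_eq_add_neg] at hminus
    simp only [List.map_cons, signAverage]
    linarith

lemma abs_le_one_of_lpNorm_le_one {p : ℝ} (hp : 0 < p) {n : ℕ} {x : Fin n → ℝ}
    (hx : _root_.lpNorm p x ≤ 1) (i : Fin n) : |x i| ≤ 1 := by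
  have hle : |x i| ^ p ≤ ∑ i, |x i| ^ p :=
    Finset.single_le_sum (f := fun i => |x i| ^ p) (fun i _ => by positivity) (Finset.mem_univ i)
  calc |x i| = (|x i| ^ p) ^ (1 / p) := by
        rw [← rpow_mul (abs_nonneg _), mul_one_div_cancel hp.ne', rpow_one]
    _ ≤ _root_.lpNorm p x := rpow_le_rpow (by positivity) hle (by positivity)
    _ ≤ 1 := hx

lemma abs_le_linfNorm {n : ℕ} (y : Fin n → ℝ) (i : Fin n) : |y i| ≤ linfNorm y :=
  le_ciSup (f := fun i => |y i|) (Set.finite_range _).bddAbove i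

lemma linfNorm_le_one {n : ℕ} {y : Fin n → ℝ} (h : ∀ i, |y i| ≤ 1) : linfNorm y ≤ 1 :=
  Real.iSup_le h zero_le_one

lemma exists_lpNorm_le_one_and_sum_mul_eq {p r : ℝ} (hpr : p.HolderConjugate r) {n : ℕ}
    (v : Fin n → ℝ) :
    ∃ x : Fin n → ℝ, _root_.lpNorm p x ≤ 1 ∧ ∑ i, x i * v i = _root_.lpNorm r v := by
  obtain ⟨g, hg, hgv⟩ := (NNReal.isGreatest_Lp Finset.univ (fun i => ‖v i‖₊) hpr.symm).1
  refine ⟨fun i => SignType.sign (v i) * g i, ?_, ?_⟩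
  · refine rpow_le_one (by positivity) (le_trans ?_ (NNReal.coe_le_one.2 hg))
      (one_div_nonneg.2 hpr.nonneg)
    push_cast
    gcongr with i
    · exact hpr.nonneg
    · rcases lt_trichotomy (v i) 0 with h | h | h <;> simp [h]
  · have hnorm := congrArg NNReal.toReal hgv
    push_cast [Real.norm_eq_abs] at hnorm
    rw [_root_.lpNorm, ← hnorm]
    refine Finset.sum_congr rfl fun i _ => ?_
    rw [mul_right_comm, sign_mul_self]

section BilinearForm

variable {p : ℝ} {N n : ℕ} (T : (Fin N → ℝ) →ₗ[ℝ] (Fin n → ℝ) →ₗ[ℝ] ℝ)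

lemma bilin_apply_eq_sum (x : Fin N → ℝ) (y : Fin n → ℝ) :
    T x y = ∑ i, x i * T (Pi.single i 1) y := by
  conv_lhs => rw [pi_eq_sum_univ' x]
  simp only [map_sum, map_smul, LinearMap.sum_apply, LinearMap.smul_apply, smul_eq_mul]

lemma abs_bilin_apply_le {x : Fin N → ℝ} {y : Fin n → ℝ} (hx : ∀ i, |x i| ≤ 1)
    (hy : ∀ j, |y j| ≤ 1) : |T x y| ≤ ∑ i, ∑ j, |T (Pi.single i 1) (Pi.single j 1)| := by
  have habs {m : ℕ} {z : Fin m → ℝ} (hz : ∀ i, |z i| ≤ 1) (φ : (Fin m → ℝ) →ₗ[ℝ] ℝ) :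
      |φ z| ≤ ∑ i, |φ (Pi.single i 1)| := by
    conv_lhs => rw [pi_eq_sum_univ' z]
    simp only [map_sum, map_smul, smul_eq_mul]
    refine (Finset.abs_sum_le_sum_abs _ _).trans (Finset.sum_le_sum fun i _ => ?_)
    rw [abs_mul]
    exact mul_le_of_le_one_left (abs_nonneg _) (hz i)
  exact (habs hx (T.flip y)).trans (Finset.sum_le_sum fun i _ => habs hy (T (Pi.single i 1)))

lemma abs_apply_le_bilinOpNorm (hp : 0 < p) {x : Fin N → ℝ} {y : Fin n → ℝ}
    (hx : _root_.lpNorm p x ≤ 1) (hy : ∀ j, |y j| ≤ 1) : |T x y| ≤ bilinOpNorm p T := by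
  refine le_csSup ⟨∑ i, ∑ j, |T (Pi.single i 1) (Pi.single j 1)|, ?_⟩
    ⟨x, y, hx, linfNorm_le_one hy, rfl⟩
  rintro _ ⟨x, y, hx, hy, rfl⟩
  exact abs_bilin_apply_le T (abs_le_one_of_lpNorm_le_one hp hx)
    fun j => (abs_le_linfNorm y j).trans hy

lemma bilinOpNorm_nonneg : 0 ≤ bilinOpNorm p T :=
  Real.sSup_nonneg fun _ ⟨_, _, _, _, h⟩ => h ▸ abs_nonneg _

lemma sum_abs_rpow_le_bilinOpNorm_rpow {r : ℝ} (hpr : p.HolderConjugate r) {y : Fin n → ℝ}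
    (hy : ∀ j, |y j| ≤ 1) : ∑ i, |T (Pi.single i 1) y| ^ r ≤ bilinOpNorm p T ^ r := by
  obtain ⟨x, hx, hxv⟩ := exists_lpNorm_le_one_and_sum_mul_eq hpr fun i => T (Pi.single i 1) y
  have hle : _root_.lpNorm r (fun i => T (Pi.single i 1) y) ≤ bilinOpNorm p T :=
    calc _root_.lpNorm r (fun i => T (Pi.single i 1) y) = T x y := by
          rw [← hxv, ← bilin_apply_eq_sum]
      _ ≤ |T x y| := le_abs_self _
      _ ≤ bilinOpNorm p T := abs_apply_le_bilinOpNorm T hpr.pos hx hy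
  rwa [_root_.lpNorm, one_div, rpow_inv_le_iff_of_pos (by positivity) (bilinOpNorm_nonneg T)
    hpr.symm.pos] at hle

end BilinearForm

lemma khintchineA_nonneg {r : ℝ} (hr : -1 < r) : 0 ≤ khintchineA r := by
  have : 0 < Real.Gamma ((r + 1) / 2) := Real.Gamma_pos_of_pos (by linarith)
  rw [khintchineA]
  split_ifs <;> positivity

lemma sum_sq_rpow_le_signAverage_linearMap {r : ℝ} (hr : 0 < r) {n : ℕ}
    (φ : (Fin n → ℝ) →ₗ[ℝ] ℝ) :
    (∑ j, |φ (Pi.single j 1)| ^ (2 : ℝ)) ^ (r / 2) ≤ khintchineA r ^ r *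
      signAverage (fun y => |φ y| ^ r) ((List.finRange n).map fun j => Pi.single j 1) 0 := by
  have hkhin := sum_sq_rpow_le_khintchineA_rpow_mul_signAverage hr
    (((List.finRange n).map fun j => Pi.single j 1).map φ.toAddMonoidHom) (φ.toAddMonoidHom 0)
  rw [← signAverage_comp φ.toAddMonoidHom fun x => |x| ^ r] at hkhin
  simpa [Function.comp_def, Fin.sum_univ_def] using hkhin

theorem mixed_littlewood_bilinear_general (p : ℝ) (hp : 1 < p) {N n : ℕ}
    (T : (Fin N → ℝ) →ₗ[ℝ] (Fin n → ℝ) →ₗ[ℝ] ℝ) :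
    (∑ i : Fin N, (∑ j : Fin n, |T (Pi.single i 1) (Pi.single j 1)| ^ (2 : ℝ))
        ^ ((1 / 2) * (p / (p - 1)))) ^ ((p - 1) / p)
      ≤ khintchineA (p / (p - 1)) * bilinOpNorm p T := by
  have hpr : p.HolderConjugate (p / (p - 1)) := Real.HolderConjugate.conjExponent hp
  rw [← inv_div p (p - 1)]
  generalize p / (p - 1) = r at *
  have hr := hpr.symm.pos
  have hA := khintchineA_nonneg (show -1 < r by linarith)
  have hcube := signAverage_le_of_forall_abs_le_one
    (fun y hy => sum_abs_rpow_le_bilinOpNorm_rpow T hpr hy) (List.finRange n) 0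
    (List.nodup_finRange n) (fun _ _ => rfl) (by simp)
  rw [signAverage_sum] at hcube
  rw [rpow_inv_le_iff_of_pos (by positivity) (mul_nonneg hA (bilinOpNorm_nonneg T)) hr,
    mul_rpow hA (bilinOpNorm_nonneg T), one_div_mul_eq_div]
  calc ∑ i, (∑ j, |T (Pi.single i 1) (Pi.single j 1)| ^ (2 : ℝ)) ^ (r / 2)
      ≤ ∑ i, khintchineA r ^ r * signAverage (fun y => |T (Pi.single i 1) y| ^ r)
          ((List.finRange n).map fun j => Pi.single j 1) 0 :=
        Finset.sum_le_sum fun i _ => sum_sq_rpow_le_signAverage_linearMap hr (T (Pi.single i 1))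
    _ = khintchineA r ^ r * ∑ i, signAverage (fun y => |T (Pi.single i 1) y| ^ r)
          ((List.finRange n).map fun j => Pi.single j 1) 0 := (Finset.mul_sum ..).symm
    _ ≤ khintchineA r ^ r * bilinOpNorm p T ^ r := by gcongr

/-- Mixed `(ℓ_{p/(p-1)}, ℓ₂)`-Littlewood inequality with constant `A_{p/(p-1)}`. -/
theorem mixed_littlewood_bilinear (p : ℝ) (hp : 2 ≤ p) (n : ℕ)
    (T : (Fin n → ℝ) →ₗ[ℝ] (Fin n → ℝ) →ₗ[ℝ] ℝ) :
    (∑ i : Fin n, (∑ j : Fin n, |T (Pi.single i 1) (Pi.single j 1)| ^ (2 : ℝ))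
        ^ ((1 / 2) * (p / (p - 1)))) ^ ((p - 1) / p)
      ≤ khintchineA (p / (p - 1)) * bilinOpNorm p T :=
  mixed_littlewood_bilinear_general p (by linarith) T
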